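/- Let 1 ≤ p < ∞ and let B_w : ℓ_p → ℓ_p be the unilateral weighted backward shift with bounded weight sequence w = (ω_k)_{k≥1} of positive reals. The following are equivalent: (i) ∑_{k≥1} (ω_1 ω_2 ⋯ ω_k)^{-p} < ∞ and sup_{n≥1} inf_{k≥1} ∏_{j=1}^{n} ω_{k+j} ≤ 1; (ii) B_w admits a U-frequently hypercyclic subspace; (iii) B_w is U-frequently hypercyclic and admits a hypercyclic subspace. -/

import Mathlib

/-!
Let `W k = ω_1 ⋯ ω_k`.  After multiplication of the `k`-th coordinate by `W k` the operator becomes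
the unweighted backward shift, so everything is about how the coordinates `W k * x k` are arranged.

From (iii) to the summability in (i): let `A` be the set of return times of a `𝒰`-frequently
hypercyclic vector `x` to a ball around `e_0`.  For `n ∈ A` the vector `B ^ n x` is close to `e_0`,
while `|W m * x m| ≥ 1 / 2` for `m ∈ A`; hence the sums of `W d ^ (-p)` over the differences
`d = m - n > 0`, `m ∈ A`, are bounded uniformly in `n ∈ A`.  Averaging over `n` bounds the sum over
the differences that occur with positive density, and these form a syndetic set because `A`
has positive upper density (`exists_syndetic`, where upper density is made additive along an
ultrafilter).  As the weights are bounded, the whole series converges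
(`summable_of_difference_sums`).

From (iii) to the second condition in (i): if it fails, then some power of `B` multiplies the norm
of tails by `8`.  Every infinite-dimensional closed subspace contains a vector whose tails decay
as slowly as `4 ^ (-j)` along the relevant indices, and the orbit of such a vector stays away from
`0` (`not_hypercyclic_of_expanding`).

From (i) to (ii): the condition on the infima, together with `W k → ∞`, yields arbitrarily late
positions `s` such that all products over windows of length at most a prescribed `L` ending at
`s` are at most `2` (`exists_good_position`).  Positions `s_0 < s_1 < ⋯` of this kind alternate
with huge blocks `[N k, 3 * N k)` (`IsBlockScheme`).  The subspace consists of the vectors whose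
coordinates at the `s_j` are free, and whose coordinates on block `k` are a periodic repetition of
a finite rational pattern divided by the weights and multiplied by one of the free
coordinates; it is defined by closed linear conditions on coordinates and is infinite-dimensional.
All triples (free coordinate, pattern, period) recur infinitely often.  If a free coordinate of
`z` does not vanish, then along the multiples of the period in `[N k, 2 * N k]`, for the
corresponding blocks, `B ^ n z` is close to any prescribed vector: the remaining repetitions and the
later blocks are small by summability, and the later free coordinates are multiplied by at most
`2` (`tsum_error_le`).  Such times have positive upper density (`upperDensity_pos_of_blocks`).

(ii) implies (iii) because `𝒰`-frequently hypercyclic vectors are hypercyclic.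
-/

open Filter Set
open scoped ENNReal

/-- The upper asymptotic density of a set of natural numbers. -/
noncomputable def upperDensity (A : Set ℕ) : ℝ :=
  Filter.limsup (fun N : ℕ => ((A ∩ Set.Iic N).ncard : ℝ) / (N + 1)) Filter.atTop

/-- The lower asymptotic density of a set of natural numbers. -/
noncomputable def lowerDensity (A : Set ℕ) : ℝ :=
  Filter.liminf (fun N : ℕ => ((A ∩ Set.Iic N).ncard : ℝ) / (N + 1)) Filter.atTop

/-- `x` is a hypercyclic vector for `T`: its orbit under `T` is dense. -/
def IsHypercyclicVector {X : Type*} [NormedAddCommGroup X] [NormedSpace ℝ X]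
    (T : X →L[ℝ] X) (x : X) : Prop :=
  Dense (Set.range fun n : ℕ => (T ^ n) x)

/-- `x` is a `𝒰`-frequently hypercyclic vector for `T`: every nonempty open set is
visited by the orbit along a set of times of positive upper density. -/
def IsUFreqHypercyclicVector {X : Type*} [NormedAddCommGroup X] [NormedSpace ℝ X]
    (T : X →L[ℝ] X) (x : X) : Prop :=
  ∀ U : Set X, IsOpen U → U.Nonempty → 0 < upperDensity {n : ℕ | (T ^ n) x ∈ U}

/-- `x` is a frequently hypercyclic vector for `T`: every nonempty open set is
visited by the orbit along a set of times of positive lower density. -/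
def IsFreqHypercyclicVector {X : Type*} [NormedAddCommGroup X] [NormedSpace ℝ X]
    (T : X →L[ℝ] X) (x : X) : Prop :=
  ∀ U : Set X, IsOpen U → U.Nonempty → 0 < lowerDensity {n : ℕ | (T ^ n) x ∈ U}


/-! ### Upper density and difference sets -/

lemma density_quot_mem_Icc (A : Set ℕ) (N : ℕ) :
    0 ≤ ((A ∩ Set.Iic N).ncard : ℝ) / (N + 1) ∧ ((A ∩ Set.Iic N).ncard : ℝ) / (N + 1) ≤ 1 := by
  refine ⟨by positivity, ?_⟩
  rw [div_le_one (by positivity)]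
  have h := Set.ncard_le_ncard (s := A ∩ Set.Iic N) (t := Set.Iic N) Set.inter_subset_right
    (Set.finite_Iic N)
  have h2 : (Set.Iic N).ncard = N + 1 := by
    rw [← Finset.coe_Iic, Set.ncard_coe_finset]; simp
  rw [h2] at h
  exact_mod_cast h

/-- A lower bound on the counting quotient along infinitely many `N` makes the upper density
positive. -/
lemma upperDensity_pos_of_frequently {A : Set ℕ} {c : ℝ} (hc : 0 < c)
    (h : ∃ᶠ N : ℕ in atTop, c ≤ ((A ∩ Set.Iic N).ncard : ℝ) / (N + 1)) : 0 < upperDensity A := by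
  refine lt_of_lt_of_le hc (le_limsup_of_frequently_le h ?_)
  exact ⟨1, by simpa using ⟨0, fun b _ => (density_quot_mem_Icc A b).2⟩⟩

lemma nonempty_of_upperDensity_pos {A : Set ℕ} (h : 0 < upperDensity A) : A.Nonempty := by
  by_contra hA
  rw [Set.not_nonempty_iff_eq_empty] at hA
  subst hA
  simp [upperDensity] at h

/-- A set of positive upper density has a uniform positive lower bound for its counting function
along some ultrafilter at infinity. -/
lemma exists_ultrafilter_density {A : Set ℕ} (h : 0 < upperDensity A) :
    ∃ (U : Ultrafilter ℕ) (δ : ℝ), (U : Filter ℕ) ≤ atTop ∧ 0 < δ ∧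
      ∀ᶠ N : ℕ in U, δ * (N + 1) ≤ ((A ∩ Set.Iic N).ncard : ℝ) := by
  have hf : ∃ᶠ N : ℕ in atTop, upperDensity A / 2 < ((A ∩ Set.Iic N).ncard : ℝ) / (N + 1) :=
    frequently_lt_of_lt_limsup (isCoboundedUnder_le_of_le atTop
      (fun N => (density_quot_mem_Icc A N).1)) (half_lt_self h)
  have hne : NeBot (atTop ⊓ 𝓟 {N : ℕ | upperDensity A / 2 < ((A ∩ Set.Iic N).ncard : ℝ) / (N + 1)}) :=
    frequently_mem_iff_neBot.1 hf
  obtain ⟨U, hU⟩ := @Ultrafilter.exists_le _ _ hne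
  refine ⟨U, upperDensity A / 2, hU.trans inf_le_left, half_pos h, ?_⟩
  have : {N : ℕ | upperDensity A / 2 < ((A ∩ Set.Iic N).ncard : ℝ) / (N + 1)} ∈ (U : Filter ℕ) :=
    (hU.trans inf_le_right) (mem_principal_self _)
  filter_upwards [this] with N hN
  have := hN.le
  rwa [le_div_iff₀ (by positivity)] at this

/-- Counting a translate `A + t` up to `N` loses at most `t` elements. -/
lemma ncard_translate_ge (A : Set ℕ) (t N : ℕ) :
    (A ∩ Set.Iic N).ncard ≤ (((· + t) '' A) ∩ Set.Iic N).ncard + t := by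
  have hinj : Function.Injective (· + t : ℕ → ℕ) := add_left_injective t
  rw [← Set.ncard_image_of_injective (A ∩ Set.Iic N) hinj]
  have hsub : (· + t) '' (A ∩ Set.Iic N) ⊆ (((· + t) '' A) ∩ Set.Iic N) ∪ Set.Ioc N (N + t) := by
    rintro _ ⟨n, ⟨hn, hnN⟩, rfl⟩
    simp only [Set.mem_Iic] at hnN
    by_cases h : n + t ≤ N
    · exact Or.inl ⟨⟨n, hn, rfl⟩, h⟩
    · exact Or.inr ⟨by simpa using h, by simpa using hnN⟩
  refine (Set.ncard_le_ncard hsub (((Set.finite_Iic N).subset Set.inter_subset_right).union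
    (Set.finite_Ioc _ _))).trans ((Set.ncard_union_le _ _).trans ?_)
  have : (Set.Ioc N (N + t)).ncard = t := by
    rw [← Finset.coe_Ioc, Set.ncard_coe_finset]; simp
  omega

/-- Two translates of `A` meet in a copy of `A ∩ (A - (d - t))`. -/
lemma ncard_translate_inter_le (A : Set ℕ) {t d : ℕ} (htd : t ≤ d) (N : ℕ) :
    (((· + d) '' A) ∩ ((· + t) '' A) ∩ Set.Iic N).ncard ≤
      ({m | m ∈ A ∧ m + (d - t) ∈ A} ∩ Set.Iic N).ncard := by
  have hsub : ((· + d) '' A) ∩ ((· + t) '' A) ∩ Set.Iic N ⊆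
      (· + d) '' ({m | m ∈ A ∧ m + (d - t) ∈ A} ∩ Set.Iic N) := by
    rintro x ⟨⟨⟨m, hm, rfl⟩, ⟨m', hm', h⟩⟩, hx⟩
    simp only [Set.mem_Iic] at hx h
    refine ⟨m, ⟨⟨hm, ?_⟩, by simp only [Set.mem_Iic]; omega⟩, rfl⟩
    have : m + (d - t) = m' := by omega
    rwa [this]
  have hfin : ({m | m ∈ A ∧ m + (d - t) ∈ A} ∩ Set.Iic N).Finite :=
    (Set.finite_Iic N).subset Set.inter_subset_right
  exact (Set.ncard_le_ncard hsub (hfin.image _)).trans (Set.ncard_image_le hfin)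

/-- The differences occurring with positive density in a set of positive density form a syndetic
set.  Otherwise one could add translates of `A` one at a time, almost disjoint from the previous
ones, until their total density exceeds `1`. -/
lemma exists_syndetic {A : Set ℕ} {U : Ultrafilter ℕ} {δ : ℝ} (hU : (U : Filter ℕ) ≤ atTop)
    (hδ : 0 < δ) (hA : ∀ᶠ N : ℕ in U, δ * (N + 1) ≤ ((A ∩ Set.Iic N).ncard : ℝ)) :
    ∃ (ε : ℝ) (T : Finset ℕ) (m : ℕ), 0 < ε ∧ (∀ t ∈ T, t < m) ∧ ∀ d, m ≤ d → ∃ t ∈ T,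
      ∀ᶠ N : ℕ in U,
        ε * (N + 1) ≤ (({m | m ∈ A ∧ m + (d - t) ∈ A} ∩ Set.Iic N).ncard : ℝ) := by
  obtain ⟨R, hR⟩ := exists_nat_gt (2 / δ)
  have hR0 : (0 : ℝ) < R := lt_trans (by positivity) hR
  by_contra hcon
  push Not at hcon
  set ε : ℝ := δ / (8 * R) with hε
  have hε0 : 0 < ε := by positivity
  have key : ∀ r : ℕ, r ≤ R → ∃ T : Finset ℕ, T.card ≤ r ∧ ∀ᶠ N : ℕ in U,
      r * δ / 2 * (N + 1) ≤ (((⋃ t ∈ T, (· + t) '' A) ∩ Set.Iic N).ncard : ℝ) := by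
    intro r
    induction r with
    | zero => intro _; exact ⟨∅, by simp, by simp⟩
    | succ r ih =>
      intro hr
      obtain ⟨T, hTc, hT⟩ := ih (by omega)
      obtain ⟨d, hd, hdT⟩ := hcon ε T (T.sup id + 1) hε0
        (fun t ht => Nat.lt_succ_of_le (Finset.le_sup (f := id) ht))
      have hdlt : ∀ t ∈ T, t ≤ d := fun t ht =>
        ((Finset.le_sup (f := id) ht).trans (Nat.le_succ _)).trans hd
      refine ⟨insert d T, (Finset.card_insert_le _ _).trans (by omega), ?_⟩
      have hlarge : ∀ᶠ N : ℕ in U, (d : ℝ) ≤ δ / 4 * (N + 1) := by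
        apply hU
        have : Tendsto (fun N : ℕ => δ / 4 * ((N : ℝ) + 1)) atTop atTop :=
          Tendsto.const_mul_atTop (by positivity)
            (tendsto_atTop_add_const_right _ _ tendsto_natCast_atTop_atTop)
        exact this.eventually_ge_atTop _
      have hsmall : ∀ᶠ N : ℕ in U, ∀ t ∈ T,
          (({m | m ∈ A ∧ m + (d - t) ∈ A} ∩ Set.Iic N).ncard : ℝ) < ε * (N + 1) := by
        rw [Filter.eventually_all_finset]
        exact hdT
      filter_upwards [hT, hA, hlarge, hsmall] with N h1 h2 h3 h4
      set V := (⋃ t ∈ T, (· + t) '' A) ∩ Set.Iic N with hV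
      set D := ((· + d) '' A) ∩ Set.Iic N with hD
      have hVf : V.Finite := (Set.finite_Iic N).subset Set.inter_subset_right
      have hDf : D.Finite := (Set.finite_Iic N).subset Set.inter_subset_right
      have hun : (⋃ t ∈ insert d T, (· + t) '' A) ∩ Set.Iic N = D ∪ V := by
        rw [Finset.set_biUnion_insert, Set.union_inter_distrib_right]
      have hie := Set.ncard_union_add_ncard_inter D V hDf hVf
      have hint : ((D ∩ V).ncard : ℝ) ≤ r * (ε * (N + 1)) := by
        have hsub : D ∩ V ⊆ ⋃ t ∈ T, (((· + d) '' A) ∩ ((· + t) '' A) ∩ Set.Iic N) := by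
          rintro x ⟨⟨hxd, hx⟩, hxV, -⟩
          simp only [Set.mem_iUnion] at hxV ⊢
          obtain ⟨t, ht, hxt⟩ := hxV
          exact ⟨t, ht, ⟨hxd, hxt⟩, hx⟩
        have hfin : (⋃ t ∈ T, (((· + d) '' A) ∩ ((· + t) '' A) ∩ Set.Iic N)).Finite :=
          (Set.finite_Iic N).subset (by
            intro x hx
            simp only [Set.mem_iUnion] at hx
            obtain ⟨t, ht, hxt⟩ := hx
            exact hxt.2)
        have e1 := (Set.ncard_le_ncard hsub hfin).trans
          (Finset.set_ncard_biUnion_le T _)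
        calc ((D ∩ V).ncard : ℝ) ≤ ∑ t ∈ T,
              ((((· + d) '' A) ∩ ((· + t) '' A) ∩ Set.Iic N).ncard : ℝ) := by exact_mod_cast e1
          _ ≤ ∑ t ∈ T, ε * (N + 1) := by
              refine Finset.sum_le_sum fun t ht => le_trans ?_ (h4 t ht).le
              exact_mod_cast ncard_translate_inter_le A (hdlt t ht) N
          _ = T.card * (ε * (N + 1)) := by simp
          _ ≤ r * (ε * (N + 1)) := by gcongr
      have hDge : ((A ∩ Set.Iic N).ncard : ℝ) ≤ D.ncard + d := by
        exact_mod_cast ncard_translate_ge A d N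
      have hie' : ((D ∪ V).ncard : ℝ) + (D ∩ V).ncard = D.ncard + V.ncard := by exact_mod_cast hie
      have hrε : (r : ℝ) * (ε * (N + 1)) ≤ δ / 8 * (N + 1) := by
        have : (r : ℝ) * ε ≤ δ / 8 := by
          have hrR : (r : ℝ) ≤ R := by exact_mod_cast (by omega : r ≤ R)
          calc (r : ℝ) * ε ≤ R * ε := by gcongr
            _ = δ / 8 := by rw [hε]; field_simp
        nlinarith [show (0 : ℝ) ≤ (N : ℝ) + 1 by positivity]
      rw [hun]
      push_cast
      have hN1 : 0 < δ * ((N : ℝ) + 1) := by positivity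
      nlinarith
  obtain ⟨T, -, hT⟩ := key R le_rfl
  obtain ⟨N, hN⟩ := hT.exists
  have h1 := (density_quot_mem_Icc (⋃ t ∈ T, (· + t) '' A) N).2
  rw [div_le_one (by positivity)] at h1
  have h2 : 1 < R * δ / 2 := by
    rw [div_lt_iff₀ hδ] at hR; linarith
  nlinarith [show (0 : ℝ) < (N : ℝ) + 1 by positivity]

/-- If the sums of `a` over the differences `m - n`, `m ∈ A`, are bounded uniformly in `n ∈ A`,
where `A` has positive upper density, then `a` is summable, provided that `a` cannot drop too fast.
Averaging over `n` bounds the sum of `a` over the set of popular differences, which is syndetic. -/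
lemma summable_of_difference_sums {A : Set ℕ} (hA : 0 < upperDensity A) {a : ℕ → ℝ} {K : ℝ}
    (hK : 1 ≤ K) (ha : ∀ d, 0 ≤ a d) (haK : ∀ d, a d ≤ K * a (d + 1))
    (hsum : ∀ n ∈ A, ∀ F : Finset ℕ, (∀ d ∈ F, 1 ≤ d ∧ n + d ∈ A) → ∑ d ∈ F, a d ≤ 1) :
    Summable a := by
  classical
  obtain ⟨U, δ, hU, hδ, hAU⟩ := exists_ultrafilter_density hA
  obtain ⟨ε, T, m, hε, hTm, hsyn⟩ := exists_syndetic hU hδ hAU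
  let Q : ℕ → Prop := fun d => 1 ≤ d ∧ ∀ᶠ N : ℕ in U,
    ε * (N + 1) ≤ (({m | m ∈ A ∧ m + d ∈ A} ∩ Set.Iic N).ncard : ℝ)
  let b : ℕ → ℝ := fun d => if Q d then a d else 0
  have hb0 : ∀ d, 0 ≤ b d := fun d => by
    simp only [b]; split_ifs
    · exact ha d
    · exact le_rfl
  have hb : Summable b := by
    refine summable_of_sum_le (c := 1 / ε) hb0 fun F => ?_
    have h1 : ∑ d ∈ F, b d = ∑ d ∈ F.filter Q, a d := by rw [Finset.sum_filter]
    rw [h1]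
    have h2 : ∀ᶠ N : ℕ in U, ∀ d ∈ F.filter Q,
        ε * (N + 1) ≤ (({m | m ∈ A ∧ m + d ∈ A} ∩ Set.Iic N).ncard : ℝ) := by
      rw [Filter.eventually_all_finset]
      intro d hd
      exact (Finset.mem_filter.1 hd).2.2
    obtain ⟨N, hN⟩ := h2.exists
    -- double counting of the pairs `(n, n + d)` in `A` with `n ≤ N`
    have h3 : ∑ d ∈ F.filter Q, a d * (ε * (N + 1)) ≤ N + 1 := by
      calc ∑ d ∈ F.filter Q, a d * (ε * (N + 1))
          ≤ ∑ d ∈ F.filter Q, a d * ∑ n ∈ Finset.Iic N, (if n ∈ A ∧ n + d ∈ A then 1 else 0) := by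
            refine Finset.sum_le_sum fun d hd => mul_le_mul_of_nonneg_left ?_ (ha d)
            refine (hN d hd).trans (le_of_eq ?_)
            rw [← Finset.sum_filter, Finset.sum_const, nsmul_eq_mul, mul_one,
              ← Set.ncard_coe_finset]
            congr 2
            ext n; simp [and_comm]
        _ = ∑ n ∈ Finset.Iic N, ∑ d ∈ F.filter Q, (if n ∈ A ∧ n + d ∈ A then a d else 0) := by
            simp_rw [Finset.mul_sum]
            rw [Finset.sum_comm]
            simp
        _ ≤ ∑ n ∈ Finset.Iic N, (1 : ℝ) := by
            refine Finset.sum_le_sum fun n _ => ?_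
            rw [← Finset.sum_filter]
            by_cases hn : n ∈ A
            · refine hsum n hn _ fun d hd => ?_
              rw [Finset.mem_filter, Finset.mem_filter] at hd
              exact ⟨hd.1.2.1, hd.2.2⟩
            · simp [hn]
        _ = N + 1 := by simp
    rw [← Finset.sum_mul] at h3
    rw [le_div_iff₀ hε]
    have hN1 : (0 : ℝ) < (N : ℝ) + 1 := by positivity
    nlinarith
  have hKpow : ∀ i d, a d ≤ K ^ i * a (d + i) := by
    intro i
    induction i with
    | zero => intro d; simp
    | succ i ih =>
      intro d
      calc a d ≤ K ^ i * a (d + i) := ih d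
        _ ≤ K ^ i * (K * a (d + i + 1)) := by gcongr; exact haK _
        _ = K ^ (i + 1) * a (d + (i + 1)) := by rw [pow_succ]; ring_nf
  refine Summable.of_nonneg_of_le ha (f := fun d => K ^ m * ∑ t ∈ T, b (d + (m - t))) ?_ ?_
  · intro d
    obtain ⟨t, ht, hQ⟩ := hsyn (d + m) (by omega)
    have htm := hTm t ht
    have e : d + m - t = d + (m - t) := by omega
    rw [e] at hQ
    have hQ' : Q (d + (m - t)) := ⟨by omega, hQ⟩
    calc a d ≤ K ^ (m - t) * a (d + (m - t)) := hKpow _ _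
      _ ≤ K ^ m * a (d + (m - t)) :=
          mul_le_mul_of_nonneg_right (pow_le_pow_right₀ hK (by omega)) (ha _)
      _ = K ^ m * b (d + (m - t)) := by simp only [b, hQ', if_true]
      _ ≤ K ^ m * ∑ t ∈ T, b (d + (m - t)) := by
          gcongr
          exact Finset.single_le_sum (f := fun t => b (d + (m - t))) (fun t _ => hb0 _) ht
  · refine Summable.mul_left _ (summable_sum fun t _ => ?_)
    exact (summable_nat_add_iff (m - t)).2 hb

/-! ### Iterates of a weighted backward shift -/

/-- The cumulative product `ω_1 ⋯ ω_k` of the weights.  Multiplying the `k`-th coordinate of a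
vector by it conjugates the weighted backward shift to the unweighted one. -/
noncomputable def cumWeight (w : ℕ → ℝ) (k : ℕ) : ℝ := ∏ j ∈ Finset.Icc 1 k, w j

@[simp] lemma cumWeight_zero (w : ℕ → ℝ) : cumWeight w 0 = 1 := by simp [cumWeight]

lemma cumWeight_succ (w : ℕ → ℝ) (k : ℕ) : cumWeight w (k + 1) = cumWeight w k * w (k + 1) := by
  rw [cumWeight, Finset.prod_Icc_succ_top (by omega)]; rfl

lemma cumWeight_pos {w : ℕ → ℝ} (hw : ∀ k : ℕ, 1 ≤ k → 0 < w k) (k : ℕ) : 0 < cumWeight w k :=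
  Finset.prod_pos fun j hj => hw j (Finset.mem_Icc.1 hj).1

lemma cumWeight_add (w : ℕ → ℝ) (k n : ℕ) :
    cumWeight w (k + n) = cumWeight w k * ∏ j ∈ Finset.Icc 1 n, w (k + j) := by
  induction n with
  | zero => simp
  | succ n ih =>
    rw [← add_assoc, cumWeight_succ, ih, Finset.prod_Icc_succ_top (by omega), mul_assoc, add_assoc]

lemma iterate_apply {p : ℝ≥0∞} [Fact (1 ≤ p)] {w : ℕ → ℝ} (hw : ∀ k : ℕ, 1 ≤ k → 0 < w k)
    {B : lp (fun _ : ℕ => ℝ) p →L[ℝ] lp (fun _ : ℕ => ℝ) p}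
    (hB : ∀ (x : lp (fun _ : ℕ => ℝ) p) (n : ℕ), (B x) n = w (n + 1) * x (n + 1))
    (n : ℕ) (x : lp (fun _ : ℕ => ℝ) p) (i : ℕ) :
    ((B ^ n) x) i = cumWeight w (i + n) / cumWeight w i * x (i + n) := by
  induction n generalizing i with
  | zero => simp [div_self (cumWeight_pos hw i).ne']
  | succ n ih =>
    rw [pow_succ', mul_apply_eq_comp, hB, ih]
    have h1 := (cumWeight_pos hw i).ne'
    have h2 := (hw (i + 1) (by omega)).ne'
    rw [cumWeight_succ w i, show i + 1 + n = i + (n + 1) by ring]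
    field_simp

lemma toReal_pos_of_fact {p : ℝ≥0∞} [hp1 : Fact (1 ≤ p)] (hp : p ≠ ∞) : 0 < p.toReal :=
  ENNReal.toReal_pos (zero_lt_one.trans_le hp1.out).ne' hp

/-! ### Upper frequent hypercyclicity forces summability -/

/-- The return times of a `𝒰`-frequently hypercyclic vector `x` to a ball around `e_0` form a set
of positive upper density along which `|x_n|` is comparable to `1 / (ω_1 ⋯ ω_n)`; the tail of
`B ^ n x` then controls the sums over the differences of this set. -/
lemma summable_of_uFreqHypercyclicVector {p : ℝ≥0∞} [Fact (1 ≤ p)] (hp : p ≠ ∞)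
    {w : ℕ → ℝ} (hw : ∀ k : ℕ, 1 ≤ k → 0 < w k) {C : ℝ} (hC1 : 1 ≤ C)
    (hC : ∀ k : ℕ, 1 ≤ k → w k ≤ C)
    {B : lp (fun _ : ℕ => ℝ) p →L[ℝ] lp (fun _ : ℕ => ℝ) p}
    (hB : ∀ (x : lp (fun _ : ℕ => ℝ) p) (n : ℕ), (B x) n = w (n + 1) * x (n + 1))
    {x : lp (fun _ : ℕ => ℝ) p} (hx : IsUFreqHypercyclicVector B x) :
    Summable fun k : ℕ => cumWeight w k ^ (-(p.toReal)) := by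
  have hq := toReal_pos_of_fact hp
  have hp0 : p ≠ 0 := fun h => by simp [h] at hq
  set q := p.toReal with hqdef
  let e : lp (fun _ : ℕ => ℝ) p := lp.single p 0 (1 : ℝ)
  have hA := hx (Metric.ball e (1 / 2)) Metric.isOpen_ball ⟨e, by simp⟩
  have hWpos := cumWeight_pos hw
  have hK : 1 ≤ C ^ q := Real.one_le_rpow hC1 hq.le
  refine summable_of_difference_sums hA hK (fun d => Real.rpow_nonneg (hWpos d).le _) ?_ ?_
  · intro d
    rw [cumWeight_succ, Real.mul_rpow (hWpos d).le (hw _ (by omega)).le]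
    have h1 : 1 ≤ C ^ q * w (d + 1) ^ (-q) := by
      rw [Real.rpow_neg (hw _ (by omega)).le, ← div_eq_mul_inv, le_div_iff₀
        (Real.rpow_pos_of_pos (hw _ (by omega)) _), one_mul]
      exact Real.rpow_le_rpow (hw _ (by omega)).le (hC _ (by omega)) hq.le
    have h2 : 0 ≤ cumWeight w d ^ (-q) := Real.rpow_nonneg (hWpos d).le _
    nlinarith
  · intro n hn F hF
    have hxn : ∀ m, (B ^ m) x ∈ Metric.ball e (1 / 2) → 1 / 2 ≤ |cumWeight w m * x m| := by
      intro m hm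
      have h1 := (lp.norm_apply_le_norm hp0 ((B ^ m) x - e) 0).trans
        (le_of_lt (by simpa [dist_eq_norm] using hm))
      have h2 : ((B ^ m) x - e) 0 = cumWeight w m * x m - 1 := by
        rw [lp.coeFn_sub, Pi.sub_apply, iterate_apply hw hB]
        simp [e]
      rw [h2, Real.norm_eq_abs] at h1
      have := abs_sub_abs_le_abs_sub (1 : ℝ) (cumWeight w m * x m)
      rw [abs_one, abs_sub_comm] at this
      linarith
    have hnn : ‖(B ^ n) x - e‖ ≤ 1 / 2 := le_of_lt (by simpa [dist_eq_norm] using hn)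
    have h3 := (lp.sum_rpow_le_norm_rpow hq ((B ^ n) x - e) F).trans
      (Real.rpow_le_rpow (norm_nonneg _) hnn hq.le)
    have h4 : ∑ d ∈ F, (1 / 2 : ℝ) ^ q * cumWeight w d ^ (-q) ≤
        ∑ d ∈ F, ‖((B ^ n) x - e) d‖ ^ q := by
      refine Finset.sum_le_sum fun d hd => ?_
      obtain ⟨hd1, hd2⟩ := hF d hd
      have h5 : ((B ^ n) x - e) d = (cumWeight w (n + d) * x (n + d)) / cumWeight w d := by
        rw [lp.coeFn_sub, Pi.sub_apply, iterate_apply hw hB, lp.single_apply_ne _ _ _ (by omega),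
          add_comm d n]
        ring
      rw [h5, Real.norm_eq_abs, abs_div, abs_of_pos (hWpos d), Real.rpow_neg (hWpos d).le,
        ← div_eq_mul_inv, ← Real.div_rpow (by norm_num) (hWpos d).le]
      exact Real.rpow_le_rpow (by have := hWpos d; positivity)
        (div_le_div_of_nonneg_right (hxn _ hd2) (hWpos d).le) hq.le
    rw [← Finset.mul_sum] at h4
    have h6 : (0 : ℝ) < (1 / 2 : ℝ) ^ q := Real.rpow_pos_of_pos (by norm_num) _
    by_contra hcon
    push Not at hcon
    have := h4.trans h3
    nlinarith

/-! ### Uniformly expanding products exclude hypercyclic subspaces -/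

/-- The unweighted backward shift by `m` steps, as a map on `ℓ_p`; its norm at `x` is the norm of
the part of `x` carried by the indices `≥ m`. -/
noncomputable def tailShift {p : ℝ≥0∞} (hq : 0 < p.toReal) (m : ℕ)
    (x : lp (fun _ : ℕ => ℝ) p) : lp (fun _ : ℕ => ℝ) p :=
  ⟨fun i => x (i + m), memℓp_gen (by
    have := (lp.memℓp x).summable hq
    exact (summable_nat_add_iff (f := fun i => ‖x i‖ ^ p.toReal) m).2 this)⟩

lemma tailShift_apply {p : ℝ≥0∞} (hq : 0 < p.toReal) (m : ℕ) (x : lp (fun _ : ℕ => ℝ) p) (i : ℕ) :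
    tailShift hq m x i = x (i + m) := rfl

lemma tailShift_norm_le {p : ℝ≥0∞} (hq : 0 < p.toReal) (m : ℕ) (x : lp (fun _ : ℕ => ℝ) p) :
    ‖tailShift hq m x‖ ≤ ‖x‖ := by
  refine lp.norm_le_of_forall_sum_le hq (lp.norm_nonneg' x) fun s => ?_
  have := lp.sum_rpow_le_norm_rpow hq x (s.map (addRightEmbedding m))
  simpa [tailShift_apply] using this

lemma tailShift_norm_eq {p : ℝ≥0∞} (hq : 0 < p.toReal) {m : ℕ} {x : lp (fun _ : ℕ => ℝ) p}
    (hx : ∀ i < m, x i = 0) : ‖tailShift hq m x‖ = ‖x‖ := by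
  refine le_antisymm (tailShift_norm_le hq m x) ?_
  have h := (lp.norm_rpow_eq_tsum hq (tailShift hq m x))
  have h2 := (lp.norm_rpow_eq_tsum hq x)
  have h3 := (((lp.memℓp x).summable hq).sum_add_tsum_nat_add m)
  have h4 : ∑ i ∈ Finset.range m, ‖x i‖ ^ p.toReal = 0 :=
    Finset.sum_eq_zero fun i hi => by
      rw [hx i (Finset.mem_range.1 hi), norm_zero, Real.zero_rpow hq.ne']
  rw [h4, zero_add] at h3
  rw [← Real.rpow_le_rpow_iff (lp.norm_nonneg' x) (lp.norm_nonneg' _) hq, h, h2, ← h3]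
  rfl

lemma tailShift_add {p : ℝ≥0∞} (hq : 0 < p.toReal) (m : ℕ) (x y : lp (fun _ : ℕ => ℝ) p) :
    tailShift hq m (x + y) = tailShift hq m x + tailShift hq m y := rfl

lemma tailShift_sub {p : ℝ≥0∞} (hq : 0 < p.toReal) (m : ℕ) (x y : lp (fun _ : ℕ => ℝ) p) :
    tailShift hq m (x - y) = tailShift hq m x - tailShift hq m y := rfl

/-- If all products of `N` consecutive weights, from the second one on, are at least `8`, then
every infinite-dimensional closed subspace contains a nonzero vector whose orbit stays away from
zero, because it contains vectors whose tails decay slower than any prescribed rate. -/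
lemma not_hypercyclic_of_expanding {p : ℝ≥0∞} [Fact (1 ≤ p)] (hp : p ≠ ∞)
    {w : ℕ → ℝ} (hw : ∀ k : ℕ, 1 ≤ k → 0 < w k)
    {B : lp (fun _ : ℕ => ℝ) p →L[ℝ] lp (fun _ : ℕ => ℝ) p}
    (hB : ∀ (x : lp (fun _ : ℕ => ℝ) p) (n : ℕ), (B x) n = w (n + 1) * x (n + 1))
    {N : ℕ} (hN1 : 1 ≤ N) (hN : ∀ k, 8 * cumWeight w (k + 1) ≤ cumWeight w (k + 1 + N))
    {Y : Submodule ℝ (lp (fun _ : ℕ => ℝ) p)} (hYc : IsClosed (Y : Set (lp (fun _ : ℕ => ℝ) p)))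
    (hYd : ¬ FiniteDimensional ℝ Y) :
    ∃ x ∈ Y, x ≠ 0 ∧ ¬ IsHypercyclicVector B x := by
  have hq := toReal_pos_of_fact hp
  have hWpos := cumWeight_pos hw
  have hexp : ∀ j k, 8 ^ j * cumWeight w (k + 1) ≤ cumWeight w (k + 1 + j * N) := by
    intro j
    induction j with
    | zero => simp
    | succ j ih =>
      intro k
      calc (8 : ℝ) ^ (j + 1) * cumWeight w (k + 1) = 8 * (8 ^ j * cumWeight w (k + 1)) := by ring
        _ ≤ 8 * cumWeight w (k + j * N + 1) := by
            rw [show k + j * N + 1 = k + 1 + j * N by ring]; gcongr; exact ih k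
        _ ≤ _ := by
            rw [show k + 1 + (j + 1) * N = k + j * N + 1 + N by ring]; exact hN _
  have hBT : ∀ j (x : lp (fun _ : ℕ => ℝ) p),
      8 ^ j * ‖tailShift hq (j * N + 1) x‖ ≤ ‖(B ^ (j * N)) x‖ := by
    intro j x
    have h1 : ‖(8 ^ j : ℝ) • tailShift hq (j * N + 1) x‖ ≤ ‖tailShift hq 1 ((B ^ (j * N)) x)‖ := by
      refine lp.norm_le_of_forall_sum_le hq (norm_nonneg _) fun s => ?_
      refine le_trans (Finset.sum_le_sum fun i _ => ?_)
        (lp.sum_rpow_le_norm_rpow hq (tailShift hq 1 ((B ^ (j * N)) x)) s)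
      refine Real.rpow_le_rpow (norm_nonneg _) ?_ hq.le
      rw [lp.coeFn_smul, Pi.smul_apply, tailShift_apply, tailShift_apply, iterate_apply hw hB,
        smul_eq_mul, norm_mul, norm_mul, show i + (j * N + 1) = i + 1 + j * N by ring]
      gcongr
      rw [Real.norm_eq_abs, Real.norm_eq_abs, abs_of_pos (by positivity),
        abs_of_pos (div_pos (hWpos _) (hWpos _)), le_div_iff₀ (hWpos _)]
      exact hexp j i
    rw [norm_smul, Real.norm_eq_abs, abs_of_pos (by positivity)] at h1
    exact h1.trans (tailShift_norm_le hq 1 _)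
  have hy : ∀ m : ℕ, ∃ y ∈ Y, ‖y‖ = 1 ∧ ‖tailShift hq m y‖ = 1 := by
    intro m
    let Φ : Y →ₗ[ℝ] (Fin m → ℝ) :=
      { toFun := fun y i => (y : lp (fun _ : ℕ => ℝ) p) i
        map_add' := fun _ _ => rfl
        map_smul' := fun _ _ => rfl }
    have hΦ : ¬ Function.Injective Φ := fun h => hYd (FiniteDimensional.of_injective Φ h)
    rw [← LinearMap.ker_eq_bot, Submodule.eq_bot_iff] at hΦ
    push Not at hΦ
    obtain ⟨y, hy, hy0⟩ := hΦ
    have hy0' : (y : lp (fun _ : ℕ => ℝ) p) ≠ 0 := fun h => hy0 (Subtype.ext h)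
    have hn : ‖(‖(y : lp (fun _ : ℕ => ℝ) p)‖⁻¹ : ℝ) • (y : lp (fun _ : ℕ => ℝ) p)‖ = 1 := by
      rw [norm_smul, norm_inv, norm_norm, inv_mul_cancel₀ (norm_ne_zero_iff.2 hy0')]
    refine ⟨(‖(y : lp (fun _ : ℕ => ℝ) p)‖⁻¹ : ℝ) • (y : lp (fun _ : ℕ => ℝ) p),
      Y.smul_mem _ y.2, hn, ?_⟩
    rw [tailShift_norm_eq hq, hn]
    intro i hi
    have : (y : lp (fun _ : ℕ => ℝ) p) i = 0 := congrFun (LinearMap.mem_ker.1 hy) ⟨i, hi⟩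
    rw [lp.coeFn_smul, Pi.smul_apply, this, smul_zero]
  choose y hyY hy1 hyT using fun j : ℕ => hy (j * N + 1)
  -- Each sign is chosen so that the new term does not cancel against the previous ones.
  have hstep : ∀ (j : ℕ) (s : lp (fun _ : ℕ => ℝ) p), ∃ s' : lp (fun _ : ℕ => ℝ) p,
      (s ∈ Y → s' ∈ Y) ∧ dist s s' ≤ 1 * (1 / 4) ^ j ∧
      (1 / 4 : ℝ) ^ j ≤ ‖tailShift hq (j * N + 1) s'‖ := by
    intro j s
    set c : ℝ := (1 / 4) ^ j with hc
    have hc0 : 0 < c := by positivity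
    have hcy : ‖c • y j‖ = c := by rw [norm_smul, hy1, Real.norm_eq_abs, abs_of_pos hc0, mul_one]
    have hcT : ‖tailShift hq (j * N + 1) (c • y j)‖ = c := by
      have : tailShift hq (j * N + 1) (c • y j) = c • tailShift hq (j * N + 1) (y j) := rfl
      rw [this, norm_smul, hyT, Real.norm_eq_abs, abs_of_pos hc0, mul_one]
    by_cases h : c ≤ ‖tailShift hq (j * N + 1) (s + c • y j)‖
    · exact ⟨s + c • y j, fun hs => Y.add_mem hs (Y.smul_mem _ (hyY j)),
        by simp [hcy], h⟩
    · refine ⟨s - c • y j, fun hs => Y.sub_mem hs (Y.smul_mem _ (hyY j)),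
        by simp [hcy], ?_⟩
      rw [tailShift_add] at h
      rw [tailShift_sub]
      set a := tailShift hq (j * N + 1) s
      set b := tailShift hq (j * N + 1) (c • y j)
      have : ‖(a + b) - (a - b)‖ = 2 * c := by
        rw [show (a + b) - (a - b) = (2 : ℝ) • b by rw [two_smul]; abel, norm_smul, hcT]; norm_num
      have := this ▸ norm_sub_le (a + b) (a - b)
      push Not at h
      linarith
  choose nxt hnY hnd hnT using hstep
  let S : ℕ → lp (fun _ : ℕ => ℝ) p := fun j => Nat.rec 0 (fun j s => nxt j s) j
  have hSs : ∀ j, S (j + 1) = nxt j (S j) := fun _ => rfl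
  have hSY : ∀ j, S j ∈ Y := by
    intro j
    induction j with
    | zero => exact Y.zero_mem
    | succ j ih => rw [hSs]; exact hnY _ _ ih
  have hSd : ∀ j, dist (S j) (S (j + 1)) ≤ 1 * (1 / 4) ^ j := fun j => hnd j (S j)
  obtain ⟨x, hx⟩ := cauchySeq_tendsto_of_complete (cauchySeq_of_le_geometric _ _ (by norm_num) hSd)
  have hxY : x ∈ Y := hYc.mem_of_tendsto hx (Eventually.of_forall hSY)
  have hxT : ∀ j, (2 / 3) * (1 / 4 : ℝ) ^ j ≤ ‖tailShift hq (j * N + 1) x‖ := by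
    intro j
    have h1 := dist_le_of_le_geometric_of_tendsto _ _ (by norm_num) hSd hx (j + 1)
    have h2 : (1 / 4 : ℝ) ^ j ≤ ‖tailShift hq (j * N + 1) (S (j + 1))‖ := hnT j (S j)
    have h3 := tailShift_norm_le hq (j * N + 1) (S (j + 1) - x)
    rw [tailShift_sub, ← dist_eq_norm (S (j + 1))] at h3
    have h4 := norm_le_norm_add_norm_sub (tailShift hq (j * N + 1) x)
      (tailShift hq (j * N + 1) (S (j + 1)))
    rw [norm_sub_rev] at h4
    rw [pow_succ] at h1
    generalize (1 / 4 : ℝ) ^ j = c at *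
    have h5 : 1 * (c * (1 / 4)) / (1 - 1 / 4) = c / 3 := by ring
    rw [h5] at h1
    linarith
  have hbig : ∀ j, 2 / 3 ≤ ‖(B ^ (j * N)) x‖ := by
    intro j
    refine le_trans ?_ (hBT j x)
    calc (2 / 3 : ℝ) ≤ 2 / 3 * 2 ^ j := by
          have := one_le_pow₀ (one_le_two (α := ℝ)) (n := j); linarith
      _ = 8 ^ j * (2 / 3 * (1 / 4) ^ j) := by
          rw [show (2 : ℝ) = 8 * (1 / 4) by norm_num, mul_pow]; ring
      _ ≤ _ := by gcongr; exact hxT j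
  set b : ℝ := max 1 ‖B‖ with hb
  have hb1 : 1 ≤ b := le_max_left _ _
  have hbig' : ∀ r, (2 / 3) / b ^ N ≤ ‖(B ^ r) x‖ := by
    intro r
    rw [div_le_iff₀ (by positivity)]
    have hdm := Nat.div_add_mod r N
    have hml := Nat.mod_lt r (by omega : 0 < N)
    have hr : (r / N + 1) * N = (N - r % N) + r := by
      rw [add_mul, one_mul, mul_comm]; omega
    have h1 := hbig (r / N + 1)
    rw [hr, pow_add, mul_apply_eq_comp] at h1
    calc (2 / 3 : ℝ) ≤ ‖B ^ (N - r % N)‖ * ‖(B ^ r) x‖ :=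
          h1.trans (ContinuousLinearMap.le_opNorm _ _)
      _ ≤ b ^ N * ‖(B ^ r) x‖ := by
          gcongr
          calc ‖B ^ (N - r % N)‖ ≤ ‖B‖ ^ (N - r % N) := by
                refine norm_pow_le' B (by omega)
            _ ≤ b ^ (N - r % N) := by gcongr; exact le_max_right _ _
            _ ≤ b ^ N := pow_le_pow_right₀ hb1 (by omega)
      _ = _ := mul_comm _ _
  refine ⟨x, hxY, ?_, ?_⟩
  · rintro rfl
    have := hbig 0
    simp at this
    norm_num at this
  · intro hd
    obtain ⟨v, ⟨r, rfl⟩, hv⟩ := hd.exists_mem_open (Metric.isOpen_ball (x := 0)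
      (ε := (2 / 3) / b ^ N)) ⟨0, Metric.mem_ball_self (by positivity)⟩
    have := hbig' r
    rw [mem_ball_zero_iff] at hv
    linarith

/-- Powers of a uniform lower bound `> 1` for the products over windows of length `n` bound the
products over longer windows, and eventually exceed `8`. -/
lemma exists_expanding_of_iInf {w : ℕ → ℝ} (hw : ∀ k : ℕ, 1 ≤ k → 0 < w k) {n : ℕ} (hn : 1 ≤ n)
    (h : 1 < ⨅ k : ℕ, ∏ j ∈ Finset.Icc 1 n, w (k + 1 + j)) :
    ∃ N, 1 ≤ N ∧ ∀ k, 8 * cumWeight w (k + 1) ≤ cumWeight w (k + 1 + N) := by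
  set l := ⨅ k : ℕ, ∏ j ∈ Finset.Icc 1 n, w (k + 1 + j) with hl
  have hle : ∀ k, l ≤ ∏ j ∈ Finset.Icc 1 n, w (k + 1 + j) := fun k =>
    ciInf_le (f := fun k : ℕ => ∏ j ∈ Finset.Icc 1 n, w (k + 1 + j))
      ⟨0, by rintro _ ⟨k, rfl⟩; exact Finset.prod_nonneg fun j _ => (hw _ (by omega)).le⟩ k
  have hpow : ∀ r k, l ^ r * cumWeight w (k + 1) ≤ cumWeight w (k + 1 + r * n) := by
    intro r
    induction r with
    | zero => simp
    | succ r ih =>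
      intro k
      rw [show k + 1 + (r + 1) * n = k + r * n + 1 + n by ring,
        cumWeight_add w (k + r * n + 1) n]
      have h1 := ih k
      have h2 := hle (k + r * n)
      rw [show k + 1 + r * n = k + r * n + 1 by ring] at h1
      have h3 := cumWeight_pos hw (k + r * n + 1)
      calc l ^ (r + 1) * cumWeight w (k + 1) = (l ^ r * cumWeight w (k + 1)) * l := by ring
        _ ≤ _ := mul_le_mul h1 h2 (by linarith) h3.le
  obtain ⟨r, hr⟩ := pow_unbounded_of_one_lt 8 h
  have hr1 : 1 ≤ r := by
    rcases Nat.eq_zero_or_pos r with h0 | h0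
    · subst h0; norm_num at hr
    · exact h0
  refine ⟨r * n, Nat.mul_pos hr1 hn, fun k => le_trans ?_ (hpow r k)⟩
  exact mul_le_mul_of_nonneg_right hr.le (cumWeight_pos hw _).le

/-! ### Positions preceded by long windows with bounded products -/

/-- If every late position `s` had a window of length at most `L` ending at `s` with product larger
than `2`, then following these windows backwards would give exponential growth of all products
over long windows, against the assumption on the infima. -/
lemma exists_good_position {w : ℕ → ℝ} (hw : ∀ k : ℕ, 1 ≤ k → 0 < w k) {C : ℝ} (hC1 : 1 ≤ C)
    (hC : ∀ k : ℕ, 1 ≤ k → w k ≤ C) (hlim : Tendsto (cumWeight w) atTop atTop)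
    (hinf : ∀ n : ℕ, 1 ≤ n → (⨅ k : ℕ, ∏ j ∈ Finset.Icc 1 n, w (k + 1 + j)) ≤ 1) (L s₀ : ℕ) :
    ∃ s, s₀ ≤ s ∧ ∀ n ≤ L, n ≤ s → cumWeight w s ≤ 2 * cumWeight w (s - n) := by
  by_contra hcon
  push Not at hcon
  have hW := cumWeight_pos hw
  have hCW : ∀ i d, cumWeight w (d + i) ≤ C ^ i * cumWeight w d := by
    intro i
    induction i with
    | zero => simp
    | succ i ih =>
      intro d
      rw [← add_assoc, cumWeight_succ, pow_succ]
      calc cumWeight w (d + i) * w (d + i + 1) ≤ (C ^ i * cumWeight w d) * C :=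
            mul_le_mul (ih d) (hC _ (by omega)) (hw _ (by omega)).le
              (mul_nonneg (by positivity) (hW d).le)
        _ = _ := by ring
  have claim : ∀ k, s₀ ≤ k → ∀ s m, k + m * L ≤ s + L →
      2 ^ m * cumWeight w k ≤ C ^ L * cumWeight w s := by
    intro k hk s
    induction s using Nat.strong_induction_on with
    | _ s ih =>
      intro m hm
      rcases lt_or_ge s k with hsk | hsk
      · have hm0 : m = 0 := by
          by_contra h0
          have : 1 * L ≤ m * L := Nat.mul_le_mul_right L (by omega)
          omega
        subst hm0
        have h1 := hCW (k - s) s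
        rw [show s + (k - s) = k by omega] at h1
        rw [pow_zero, one_mul]
        exact h1.trans (mul_le_mul_of_nonneg_right (pow_le_pow_right₀ hC1 (by omega)) (hW s).le)
      · obtain ⟨n, hnL, hns, hn⟩ := hcon s (hk.trans hsk)
        have hn0 : n ≠ 0 := by
          rintro rfl
          have := hW s
          simp only [Nat.sub_zero] at hn
          linarith
        have hCL : 0 < C ^ L := by positivity
        have hp1 := hW (s - n)
        cases m with
        | zero =>
          have h1 := ih (s - n) (by omega) 0 (by omega)
          nlinarith
        | succ m =>
          rw [add_mul, one_mul] at hm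
          have h1 := ih (s - n) (by omega) m (by omega)
          rw [pow_succ]
          nlinarith
  obtain ⟨m, hm⟩ := pow_unbounded_of_one_lt (2 * C ^ L) (one_lt_two (α := ℝ))
  set N := m * L with hN
  have hdouble : ∀ k, s₀ ≤ k → 2 * cumWeight w k ≤ cumWeight w (k + N) := by
    intro k hk
    have h1 := claim k hk (k + N) m (by omega)
    have hCL : 0 < C ^ L := by positivity
    have h2 := hW k
    have h3 : C ^ L * (2 * cumWeight w k) ≤ C ^ L * cumWeight w (k + N) := by nlinarith
    exact le_of_mul_le_mul_left h3 hCL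
  have hN0 : 1 ≤ N := by
    by_contra h0
    have h1 := hdouble s₀ le_rfl
    rw [show N = 0 by omega, add_zero] at h1
    have := hW s₀
    linarith
  have hdouble' : ∀ r k, s₀ ≤ k → 2 ^ r * cumWeight w k ≤ cumWeight w (k + r * N) := by
    intro r
    induction r with
    | zero => simp
    | succ r ih =>
      intro k hk
      rw [show k + (r + 1) * N = k + r * N + N by ring]
      have h1 := ih k hk
      have h2 := hdouble (k + r * N) (by omega)
      rw [pow_succ]
      linarith
  have hsmall : ∀ᶠ r : ℕ in atTop, ∀ k ∈ Finset.range s₀,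
      2 * cumWeight w k ≤ cumWeight w (k + r * N) := by
    rw [Filter.eventually_all_finset]
    intro k _
    have h1 : Tendsto (fun r : ℕ => k + r * N) atTop atTop :=
      tendsto_atTop_mono
        (fun r => (Nat.le_mul_of_pos_right r hN0).trans (Nat.le_add_left _ _)) tendsto_id
    exact (hlim.comp h1).eventually_ge_atTop _
  obtain ⟨r, hr, hr1⟩ := (hsmall.and (eventually_ge_atTop 1)).exists
  have hall : ∀ k, 2 * cumWeight w k ≤ cumWeight w (k + r * N) := by
    intro k
    rcases lt_or_ge k s₀ with hk | hk
    · exact hr k (Finset.mem_range.2 hk)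
    · refine le_trans (mul_le_mul_of_nonneg_right ?_ (hW k).le) (hdouble' r k hk)
      calc (2 : ℝ) = 2 ^ 1 := by norm_num
        _ ≤ 2 ^ r := pow_le_pow_right₀ one_le_two hr1
  have h2 : (2 : ℝ) ≤ ⨅ k : ℕ, ∏ j ∈ Finset.Icc 1 (r * N), w (k + 1 + j) := by
    refine le_ciInf fun k => ?_
    have h1 := hall (k + 1)
    rw [cumWeight_add w (k + 1) (r * N), mul_comm] at h1
    exact le_of_mul_le_mul_left h1 (hW (k + 1))
  have := hinf (r * N) (Nat.mul_pos hr1 hN0)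
  linarith

lemma tendsto_cumWeight {w : ℕ → ℝ} (hw : ∀ k : ℕ, 1 ≤ k → 0 < w k) {q : ℝ} (hq : 0 < q)
    (h : Summable fun k : ℕ => cumWeight w k ^ (-q)) : Tendsto (cumWeight w) atTop atTop := by
  rw [tendsto_atTop]
  intro b
  have hb : (0 : ℝ) < (max b 1) ^ (-q) := Real.rpow_pos_of_pos (by positivity) _
  filter_upwards [h.tendsto_atTop_zero.eventually_lt_const hb] with k hk
  by_contra hlt
  push Not at hlt
  have := Real.rpow_le_rpow_of_nonpos (cumWeight_pos hw k) (hlt.le.trans (le_max_left b 1))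
    (neg_nonpos.2 hq.le)
  linarith

/-! ### Norms as sums in `[0, ∞]`, rational approximation, density of block times -/

lemma ennreal_tsum_ite_le (A : ℕ → ℝ≥0∞) (m : ℕ) :
    ∑' i, (if m ≤ i then A i else 0) = ∑' i, A (i + m) := by
  rw [← ENNReal.summable.sum_add_tsum_nat_add' (f := fun i => if m ≤ i then A i else 0) (k := m)]
  rw [Finset.sum_eq_zero, zero_add]
  · simp
  · intro i hi
    simp [Finset.mem_range.1 hi]

lemma norm_le_of_ennreal_tsum_le {p : ℝ≥0∞} (hq : 0 < p.toReal) {v : lp (fun _ : ℕ => ℝ) p}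
    {r : ℝ} (hr : 0 ≤ r)
    (h : ∑' i, ENNReal.ofReal (|v i| ^ p.toReal) ≤ ENNReal.ofReal (r ^ p.toReal)) : ‖v‖ ≤ r := by
  refine lp.norm_le_of_forall_sum_le hq hr fun s => ?_
  have h1 := (ENNReal.sum_le_tsum s).trans h
  rw [← ENNReal.ofReal_sum_of_nonneg (fun i _ => by positivity)] at h1
  exact (ENNReal.ofReal_le_ofReal_iff (by positivity)).1 h1

lemma ennreal_tsum_ne_top {p : ℝ≥0∞} (hq : 0 < p.toReal) (v : lp (fun _ : ℕ => ℝ) p) :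
    ∑' i, ENNReal.ofReal (|v i| ^ p.toReal) ≠ ∞ :=
  ((lp.memℓp v).summable hq).tsum_ofReal_ne_top

lemma memℓp_of_ennreal_tsum_ne_top {p : ℝ≥0∞} {v : ℕ → ℝ}
    (h : ∑' i, ENNReal.ofReal (|v i| ^ p.toReal) ≠ ∞) : Memℓp v p := by
  refine memℓp_gen ?_
  have := ENNReal.summable_toReal h
  refine this.congr fun i => ?_
  rw [ENNReal.toReal_ofReal (by positivity)]; rfl

/-- Sequences which become finitely supported and rational after multiplication by the weights
approximate every vector. -/
lemma exists_rational_approx {p : ℝ≥0∞} (hq : 0 < p.toReal) {W : ℕ → ℝ} (hW : ∀ i, 0 < W i)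
    (u : lp (fun _ : ℕ => ℝ) p) {α : ℝ} (hα : α ≠ 0) {η : ℝ≥0∞} (hη : 0 < η) :
    ∃ F : ℕ →₀ ℚ, ∑' i, ENNReal.ofReal (|α * (F i : ℝ) / W i - u i| ^ p.toReal) ≤ η := by
  have hη2 : 0 < η / 2 := ENNReal.half_pos hη.ne'
  obtain ⟨T, hT⟩ := ((ENNReal.tendsto_sum_nat_add _
    (ennreal_tsum_ne_top hq u)).eventually_lt_const hη2).exists
  have hη' : 0 < η / 2 / (T + 1 : ℕ) := ENNReal.div_pos hη2.ne' (ENNReal.natCast_ne_top _)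
  have hr : ∀ i, ∃ r : ℚ,
      ENNReal.ofReal (|α * (r : ℝ) / W i - u i| ^ p.toReal) < η / 2 / (T + 1 : ℕ) := by
    intro i
    have hcont : Continuous fun x : ℝ => ENNReal.ofReal (|α * x / W i - u i| ^ p.toReal) :=
      ENNReal.continuous_ofReal.comp
        ((Real.continuous_rpow_const hq.le).comp (by fun_prop))
    obtain ⟨r, hr⟩ := Rat.denseRange_cast.exists_mem_open (isOpen_lt hcont continuous_const)
      (s := {x | ENNReal.ofReal (|α * x / W i - u i| ^ p.toReal) < η / 2 / (T + 1 : ℕ)})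
      ⟨u i * W i / α, by
        have : α * (u i * W i / α) / W i - u i = 0 := by
          have := (hW i).ne'
          field_simp
          ring
        simp only [Set.mem_ofPred_eq, this, abs_zero, Real.zero_rpow hq.ne', ENNReal.ofReal_zero]
        exact hη'⟩
    exact ⟨r, hr⟩
  choose r hr using hr
  refine ⟨Finsupp.onFinset (Finset.range T) (fun i => if i < T then r i else 0)
    (fun i hi => by
      by_contra h
      simp only [Finset.mem_range] at h
      simp [h] at hi), ?_⟩
  rw [← ENNReal.summable.sum_add_tsum_nat_add' (k := T)]
  have h1 : ∑ i ∈ Finset.range T, ENNReal.ofReal (|α * ((Finsupp.onFinset (Finset.range T)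
      (fun i => if i < T then r i else 0) (fun i hi => by
        by_contra h
        simp only [Finset.mem_range] at h
        simp [h] at hi) : ℕ →₀ ℚ) i : ℝ) / W i - u i| ^ p.toReal) ≤ η / 2 := by
    calc _ ≤ ∑ i ∈ Finset.range T, η / 2 / (T + 1 : ℕ) := by
          refine Finset.sum_le_sum fun i hi => ?_
          rw [Finsupp.onFinset_apply, if_pos (Finset.mem_range.1 hi)]
          exact (hr i).le
      _ = T * (η / 2 / (T + 1 : ℕ)) := by simp
      _ ≤ (T + 1 : ℕ) * (η / 2 / (T + 1 : ℕ)) := by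
          gcongr; simp
      _ ≤ η / 2 := ENNReal.mul_div_le
  calc _ ≤ η / 2 + η / 2 := by
        refine add_le_add h1 (le_trans (le_of_eq ?_) hT.le)
        refine tsum_congr fun i => ?_
        simp
    _ = η := ENNReal.add_halves η

/-- A set containing, for infinitely many `k`, all multiples of `M` in `[N k, 2 N k]` has positive
upper density. -/
lemma upperDensity_pos_of_blocks {A : Set ℕ} {M : ℕ} (hM : 1 ≤ M) {N : ℕ → ℕ}
    (hN : ∀ k, k + 1 ≤ N k)
    (h : ∃ᶠ k in atTop, M ≤ N k ∧ ∀ n, M ∣ n → N k ≤ n → n ≤ 2 * N k → n ∈ A) :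
    0 < upperDensity A := by
  have hM0 : (0 : ℝ) < M := by exact_mod_cast hM
  refine upperDensity_pos_of_frequently (c := 1 / (6 * M)) (by positivity) ?_
  have ht : Tendsto (fun k => 2 * N k) atTop atTop :=
    tendsto_atTop_mono (fun k => by have := hN k; simp only [id]; omega) tendsto_id
  refine ht.frequently (h.mono ?_)
  rintro k ⟨hMN, hk⟩
  have hcard : N k / M ≤ (A ∩ Set.Iic (2 * N k)).ncard := by
    have hinj : Function.Injective (fun i => M * (N k / M + 1 + i)) := by
      intro a b hab
      have := Nat.eq_of_mul_eq_mul_left (by omega : 0 < M) hab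
      omega
    have h1 : ((fun i => M * (N k / M + 1 + i)) '' (Finset.range (N k / M) : Set ℕ)).ncard
        = N k / M := by
      rw [Set.ncard_image_of_injective _ hinj, Set.ncard_coe_finset, Finset.card_range]
    rw [← h1]
    refine Set.ncard_le_ncard ?_ ((Set.finite_Iic _).subset Set.inter_subset_right)
    rintro _ ⟨i, hi, rfl⟩
    simp only [Finset.coe_range, Set.mem_Iio] at hi
    have hlow : N k ≤ M * (N k / M + 1 + i) := by
      have h2 := Nat.lt_mul_div_succ (N k) (by omega : 0 < M)
      exact h2.le.trans (Nat.mul_le_mul_left M (by omega))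
    have hup : M * (N k / M + 1 + i) ≤ 2 * N k := by
      calc M * (N k / M + 1 + i) ≤ M * (2 * (N k / M)) := Nat.mul_le_mul_left M (by omega)
        _ = 2 * (M * (N k / M)) := by ring
        _ ≤ 2 * N k := Nat.mul_le_mul_left 2 (Nat.mul_div_le _ _)
    exact ⟨hk _ (Dvd.intro _ rfl) hlow hup, hup⟩
  have hN1 : (1 : ℝ) ≤ N k := by exact_mod_cast (by have := hN k; omega : 1 ≤ N k)
  have hdiv : (N k : ℝ) ≤ 2 * (M * ((N k / M : ℕ) : ℝ)) := by
    have h1 : 1 ≤ N k / M := (Nat.one_le_div_iff (by omega)).2 hMN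
    have h2 := Nat.lt_mul_div_succ (N k) (by omega : 0 < M)
    have h3 : N k ≤ 2 * (M * (N k / M)) := by nlinarith
    exact_mod_cast h3
  have hcard' : ((N k / M : ℕ) : ℝ) ≤ (A ∩ Set.Iic (2 * N k)).ncard := by exact_mod_cast hcard
  rw [div_le_div_iff₀ (by positivity) (by positivity)]
  push_cast
  nlinarith

/-! ### Block schemes -/

/-- The positions used to build the subspace: isolated indices `s k` and blocks
`[N k, P (k + 1))`, in the order `s 0 < block 0 < s 1 < block 1 < ⋯`, the `k`-th block with period
`M k` and coefficients of size `D k`.  A shift by at most `P k` steps expands `e_{s k}` at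
most by the factor `2`, and moves the later blocks into a part of the space where they have small
norm. -/
structure IsBlockScheme (w : ℕ → ℝ) (q : ℝ) (M : ℕ → ℕ) (D : ℕ → ℝ) (s N P : ℕ → ℕ) : Prop where
  P_le_s : ∀ k, P k ≤ s k
  s_lt_N : ∀ k, s k < N k
  M_le_N : ∀ k, M k + k + 1 ≤ N k
  P_succ : ∀ k, P (k + 1) = 3 * N k
  good : ∀ k, ∀ n ≤ P k, cumWeight w (s k) ≤ 2 * cumWeight w (s k - n)
  small : ∀ k, ENNReal.ofReal (D k ^ q) *
    ∑' i, ENNReal.ofReal (cumWeight w (i + (N k - P k)) ^ (-q)) ≤ 2⁻¹ ^ k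

lemma exists_blockScheme {w : ℕ → ℝ} {q : ℝ}
    (hsum : ∑' i, ENNReal.ofReal (cumWeight w i ^ (-q)) ≠ ∞)
    (hgood : ∀ L s₀, ∃ s, s₀ ≤ s ∧ ∀ n ≤ L, n ≤ s → cumWeight w s ≤ 2 * cumWeight w (s - n))
    (M : ℕ → ℕ) (D : ℕ → ℝ) : ∃ s N P : ℕ → ℕ, IsBlockScheme w q M D s N P := by
  have hstep : ∀ k P : ℕ, ∃ s N : ℕ, P ≤ s ∧ s < N ∧ M k + k + 1 ≤ N ∧
      (∀ n ≤ P, cumWeight w s ≤ 2 * cumWeight w (s - n)) ∧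
      ENNReal.ofReal (D k ^ q) *
        ∑' i, ENNReal.ofReal (cumWeight w (i + (N - P)) ^ (-q)) ≤ 2⁻¹ ^ k := by
    intro k P
    obtain ⟨s, hPs, hs⟩ := hgood P P
    have h1 : Tendsto (fun m => ENNReal.ofReal (D k ^ q) *
        ∑' i, ENNReal.ofReal (cumWeight w (i + m) ^ (-q))) atTop (nhds 0) := by
      have := ENNReal.Tendsto.const_mul (a := ENNReal.ofReal (D k ^ q))
        (ENNReal.tendsto_sum_nat_add _ hsum) (Or.inr ENNReal.ofReal_ne_top)
      simpa using this
    have h2 : (0 : ℝ≥0∞) < 2⁻¹ ^ k := ENNReal.pow_pos (by simp) k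
    obtain ⟨m, hm, hm2⟩ := ((h1.eventually_lt_const h2).and
      (eventually_ge_atTop (s + M k + k + 1))).exists
    refine ⟨s, m + P, hPs, by omega, by omega, fun n hn => hs n hn (hn.trans hPs), ?_⟩
    rw [Nat.add_sub_cancel]
    exact hm.le
  choose s N h1 h2 h3 h4 h5 using hstep
  let P : ℕ → ℕ := fun k => Nat.rec 0 (fun k P => 3 * N k P) k
  exact ⟨fun k => s k (P k), fun k => N k (P k), P, fun k => h1 _ _, fun k => h2 _ _,
    fun k => h3 _ _, fun k => rfl, fun k => h4 _ _, fun k => h5 _ _⟩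

namespace IsBlockScheme

variable {w : ℕ → ℝ} {q : ℝ} {M : ℕ → ℕ} {D : ℕ → ℝ} {s N P : ℕ → ℕ}

lemma P_mono (h : IsBlockScheme w q M D s N P) : Monotone P := by
  refine monotone_nat_of_le_succ fun k => ?_
  have := h.P_le_s k; have := h.s_lt_N k; have := h.P_succ k
  omega

lemma N_lt_P (h : IsBlockScheme w q M D s N P) (k : ℕ) : N k < P (k + 1) := by
  have := h.s_lt_N k; have := h.P_succ k
  omega

lemma P_lt_N (h : IsBlockScheme w q M D s N P) (k : ℕ) : P k < N k :=
  (h.P_le_s k).trans_lt (h.s_lt_N k)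

lemma s_strictMono (h : IsBlockScheme w q M D s N P) : StrictMono s := by
  refine strictMono_nat_of_lt_succ fun k => ?_
  have := h.s_lt_N k; have := h.P_le_s (k + 1); have := h.N_lt_P k
  omega

/-- An index at or beyond the end of block `k` that lies in block `k'` has `k < k'`. -/
lemma lt_of_mem_block (h : IsBlockScheme w q M D s N P) {k k' m : ℕ} (hm : P (k + 1) ≤ m)
    (hm' : m < P (k' + 1)) : k < k' := by
  by_contra hlt
  have := h.P_mono (show k' + 1 ≤ k + 1 by omega)
  omega

lemma block_unique (h : IsBlockScheme w q M D s N P) {k k' m : ℕ} (h1 : N k ≤ m)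
    (h2 : m < P (k + 1)) (h3 : N k' ≤ m) (h4 : m < P (k' + 1)) : k = k' := by
  by_contra hne
  rcases lt_or_gt_of_ne hne with hlt | hlt
  · have := h.P_mono (show k + 1 ≤ k' by omega); have := h.P_lt_N k'; omega
  · have := h.P_mono (show k' + 1 ≤ k by omega); have := h.P_lt_N k; omega

lemma s_notMem_block (h : IsBlockScheme w q M D s N P) (j k : ℕ) :
    ¬ (N k ≤ s j ∧ s j < P (k + 1)) := by
  rintro ⟨h1, h2⟩
  have := h.s_lt_N j; have := h.P_le_s j
  rcases lt_trichotomy j k with hlt | rfl | hlt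
  · have := h.P_mono (show j + 1 ≤ k by omega); have := h.P_lt_N k; have := h.N_lt_P j; omega
  · omega
  · have := h.P_mono (show k + 1 ≤ j by omega); omega

/-- An isolated index beyond the end of block `k` is some `s j` with `k < j`. -/
lemma lt_of_le_s (h : IsBlockScheme w q M D s N P) {k j : ℕ} (hm : P (k + 1) ≤ s j) : k < j := by
  have := h.s_lt_N j; have := h.N_lt_P j
  exact h.lt_of_mem_block hm (by omega)

/-- After a shift by `n ≤ P m`, the blocks from the `m`-th on have small total mass. -/
lemma tsum_blocks_le (h : IsBlockScheme w q M D s N P) {m n : ℕ} (hn : n ≤ P m) :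
    ∑' i, ∑' k, (if m ≤ k ∧ N k ≤ i + n ∧ i + n < P (k + 1) then
      ENNReal.ofReal (D k ^ q) * ENNReal.ofReal (cumWeight w i ^ (-q)) else 0) ≤
    ∑' k, (2⁻¹ : ℝ≥0∞) ^ (k + m) := by
  rw [ENNReal.tsum_comm, ← ennreal_tsum_ite_le (fun k => (2⁻¹ : ℝ≥0∞) ^ k) m]
  refine ENNReal.tsum_le_tsum fun k => ?_
  by_cases hk : m ≤ k
  · rw [if_pos hk]
    refine le_trans ?_ (h.small k)
    rw [← ennreal_tsum_ite_le (fun i => ENNReal.ofReal (cumWeight w i ^ (-q))), ← ENNReal.tsum_mul_left]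
    refine ENNReal.tsum_le_tsum fun i => ?_
    split_ifs with h1 h2 h2
    · exact le_rfl
    · exfalso
      have := h.P_mono hk
      omega
    · exact zero_le
    · simp
  · rw [if_neg hk]
    simp [hk]

end IsBlockScheme

/-! ### The subspace -/

/-- The vectors whose coordinates are free at the isolated indices `s j` and are determined by them
everywhere else: on block `k` the coordinates are, up to the weights, the `M k`-periodic copies
of `f k`, multiplied by the coordinate at `s (J k)`. -/
def blockSubspace (p : ℝ≥0∞) (w : ℕ → ℝ) (J M : ℕ → ℕ) (f : ℕ → ℕ → ℝ) (s N P : ℕ → ℕ) :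
    Submodule ℝ (lp (fun _ : ℕ => ℝ) p) where
  carrier := {z | (∀ k i, N k ≤ i → i < P (k + 1) →
      cumWeight w i * z i = f k (i % M k) * z (s (J k))) ∧
    ∀ i, (∀ k, ¬ (N k ≤ i ∧ i < P (k + 1))) → (∀ j, i ≠ s j) → z i = 0}
  add_mem' := by
    rintro x y ⟨hx1, hx2⟩ ⟨hy1, hy2⟩
    refine ⟨fun k i h1 h2 => ?_, fun i h1 h2 => ?_⟩
    · rw [lp.coeFn_add, Pi.add_apply, Pi.add_apply, mul_add, mul_add, hx1 k i h1 h2, hy1 k i h1 h2]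
    · rw [lp.coeFn_add, Pi.add_apply, hx2 i h1 h2, hy2 i h1 h2, add_zero]
  zero_mem' := ⟨fun k i _ _ => by simp, fun i _ _ => by simp⟩
  smul_mem' := by
    rintro c x ⟨hx1, hx2⟩
    refine ⟨fun k i h1 h2 => ?_, fun i h1 h2 => ?_⟩
    · rw [lp.coeFn_smul, Pi.smul_apply, Pi.smul_apply, smul_eq_mul, smul_eq_mul,
        mul_left_comm, hx1 k i h1 h2, mul_left_comm]
    · rw [lp.coeFn_smul, Pi.smul_apply, hx2 i h1 h2, smul_zero]

lemma mem_blockSubspace {p : ℝ≥0∞} {w : ℕ → ℝ} {J M : ℕ → ℕ} {f : ℕ → ℕ → ℝ} {s N P : ℕ → ℕ}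
    {z : lp (fun _ : ℕ => ℝ) p} : z ∈ blockSubspace p w J M f s N P ↔
    (∀ k i, N k ≤ i → i < P (k + 1) → cumWeight w i * z i = f k (i % M k) * z (s (J k))) ∧
    ∀ i, (∀ k, ¬ (N k ≤ i ∧ i < P (k + 1))) → (∀ j, i ≠ s j) → z i = 0 := Iff.rfl

lemma isClosed_blockSubspace {p : ℝ≥0∞} [Fact (1 ≤ p)] (w : ℕ → ℝ) (J M : ℕ → ℕ) (f : ℕ → ℕ → ℝ)
    (s N P : ℕ → ℕ) : IsClosed (blockSubspace p w J M f s N P : Set (lp (fun _ : ℕ => ℝ) p)) := by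
  have hev : ∀ i, Continuous fun z : lp (fun _ : ℕ => ℝ) p => z i := fun i =>
    (lp.lipschitzWith_one_eval p i).continuous
  have : (blockSubspace p w J M f s N P : Set (lp (fun _ : ℕ => ℝ) p)) =
      (⋂ (k) (i) (_ : N k ≤ i) (_ : i < P (k + 1)),
        {z | cumWeight w i * z i = f k (i % M k) * z (s (J k))}) ∩
      ⋂ (i) (_ : ∀ k, ¬ (N k ≤ i ∧ i < P (k + 1))) (_ : ∀ j, i ≠ s j), {z | z i = 0} := by
    ext z
    simp only [SetLike.mem_coe, mem_blockSubspace, Set.mem_inter_iff, Set.mem_iInter,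
      Set.mem_ofPred_eq]
  rw [this]
  refine IsClosed.inter ?_ ?_
  · refine isClosed_iInter fun k => isClosed_iInter fun i => isClosed_iInter fun _ =>
      isClosed_iInter fun _ => isClosed_eq ?_ ?_
    · exact (hev i).const_mul _
    · exact (hev _).const_mul _
  · exact isClosed_iInter fun i => isClosed_iInter fun _ => isClosed_iInter fun _ =>
      isClosed_eq (hev i) continuous_const

section

variable {p : ℝ≥0∞} {w : ℕ → ℝ} {J M : ℕ → ℕ} {f : ℕ → ℕ → ℝ} {D : ℕ → ℝ} {s N P : ℕ → ℕ}

lemma abs_div_rpow_ofReal {W x q : ℝ} (hW : 0 < W) :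
    ENNReal.ofReal (|x / W| ^ q) = ENNReal.ofReal (|x| ^ q) * ENNReal.ofReal (W ^ (-q)) := by
  rw [← ENNReal.ofReal_mul (by positivity), abs_div, abs_of_pos hW,
    Real.div_rpow (abs_nonneg _) hW.le, Real.rpow_neg hW.le, div_eq_mul_inv]

/-- The subspace contains vectors with prescribed coordinates `0` or `1` at the isolated indices. -/
lemma exists_mem_blockSubspace (hq : 0 < p.toReal) (hw : ∀ k : ℕ, 1 ≤ k → 0 < w k)
    (hf : ∀ k i, |f k i| ≤ D k) (h : IsBlockScheme w p.toReal M D s N P) (j : ℕ) :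
    ∃ z ∈ blockSubspace p w J M f s N P, ∀ l, z (s l) = if l = j then 1 else 0 := by
  classical
  have hW := cumWeight_pos hw
  let v : ℕ → ℝ := fun i => if i = s j then 1 else
    if hk : ∃ k, N k ≤ i ∧ i < P (k + 1) then
      (if J hk.choose = j then f hk.choose (i % M hk.choose) / cumWeight w i else 0) else 0
  have hvs : ∀ l, v (s l) = if l = j then 1 else 0 := by
    intro l
    simp only [v, h.s_strictMono.injective.eq_iff]
    rw [dif_neg (by rintro ⟨k, hk⟩; exact h.s_notMem_block l k hk)]
  have hvb : ∀ k i, N k ≤ i → i < P (k + 1) →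
      v i = if J k = j then f k (i % M k) / cumWeight w i else 0 := by
    intro k i h1 h2
    have hne : i ≠ s j := by
      rintro rfl
      exact h.s_notMem_block j k ⟨h1, h2⟩
    have hex : ∃ k, N k ≤ i ∧ i < P (k + 1) := ⟨k, h1, h2⟩
    have hch : hex.choose = k :=
      h.block_unique hex.choose_spec.1 hex.choose_spec.2 h1 h2
    simp only [v, if_neg hne, dif_pos hex, hch]
  have hvz : ∀ i, (∀ k, ¬ (N k ≤ i ∧ i < P (k + 1))) → i ≠ s j → v i = 0 := by
    intro i h1 h2
    simp only [v, if_neg h2]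
    rw [dif_neg (by rintro ⟨k, hk⟩; exact h1 k hk)]
  have hmem : Memℓp v p := by
    refine memℓp_of_ennreal_tsum_ne_top (ne_top_of_le_ne_top (b := 1 + 2) (by norm_num) ?_)
    calc ∑' i, ENNReal.ofReal (|v i| ^ p.toReal)
        ≤ ∑' i, ((if i = s j then 1 else 0) +
          ∑' k, (if 0 ≤ k ∧ N k ≤ i + 0 ∧ i + 0 < P (k + 1) then
            ENNReal.ofReal (D k ^ p.toReal) * ENNReal.ofReal (cumWeight w i ^ (-p.toReal))
            else 0)) := by
          refine ENNReal.tsum_le_tsum fun i => ?_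
          by_cases hi : i = s j
          · rw [if_pos hi, hi, hvs]
            simp
          · by_cases hk : ∃ k, N k ≤ i ∧ i < P (k + 1)
            · obtain ⟨k, h1, h2⟩ := hk
              refine le_trans ?_ (le_add_left (ENNReal.le_tsum k))
              rw [if_pos ⟨zero_le, by simpa using h1, by simpa using h2⟩, hvb k i h1 h2]
              split_ifs
              · rw [abs_div_rpow_ofReal (hW i)]
                gcongr
                exact hf _ _
              · simp [Real.zero_rpow hq.ne']
            · push Not at hk
              rw [hvz i (fun k hk' => absurd hk'.2 (not_lt.2 (hk k hk'.1))) hi]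
              simp [Real.zero_rpow hq.ne']
      _ ≤ 1 + 2 := by
          rw [ENNReal.tsum_add, tsum_ite_eq]
          gcongr
          refine (h.tsum_blocks_le (m := 0) (n := 0) zero_le).trans (le_of_eq ?_)
          simp only [add_zero]
          exact ENNReal.tsum_geometric_two
  refine ⟨⟨v, hmem⟩, ⟨fun k i h1 h2 => ?_, fun i h1 h2 => hvz i h1 (h2 j)⟩, hvs⟩
  change cumWeight w i * v i = f k (i % M k) * v (s (J k))
  rw [hvb k i h1 h2, hvs]
  split_ifs
  · have := (hW i).ne'
    field_simp
  · simp

lemma not_finiteDimensional_blockSubspace (hq : 0 < p.toReal) (hw : ∀ k : ℕ, 1 ≤ k → 0 < w k)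
    (hf : ∀ k i, |f k i| ≤ D k) (h : IsBlockScheme w p.toReal M D s N P) :
    ¬ FiniteDimensional ℝ (blockSubspace p w J M f s N P) := by
  intro hfin
  choose z hzY hz using exists_mem_blockSubspace (J := J) hq hw hf h
  have hli : LinearIndependent ℝ
      (fun j => (⟨z j, hzY j⟩ : blockSubspace p w J M f s N P)) := by
    rw [linearIndependent_iff']
    intro t g hg l hl
    let ev : blockSubspace p w J M f s N P →ₗ[ℝ] ℝ :=
      { toFun := fun y => (y : lp (fun _ : ℕ => ℝ) p) (s l)
        map_add' := fun _ _ => rfl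
        map_smul' := fun _ _ => rfl }
    have h1 := congrArg ev hg
    rw [map_sum, map_zero] at h1
    have h2 : ∀ j, ev (g j • ⟨z j, hzY j⟩) = if l = j then g j else 0 := by
      intro j
      rw [map_smul]
      change g j • z j (s l) = _
      rw [hz]
      simp
    simp_rw [h2] at h1
    simpa [hl] using h1
  have := hli.finite
  exact not_finite ℕ

/-- The error made at time `n` of block `k` when the shifted vector is compared with the pattern of
the block: the periodic repetitions of the pattern, the later blocks, and the later isolated
coordinates contribute one term each. -/
lemma tsum_error_le [Fact (1 ≤ p)] (hq : 0 < p.toReal) (hw : ∀ k : ℕ, 1 ≤ k → 0 < w k)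
    {B : lp (fun _ : ℕ => ℝ) p →L[ℝ] lp (fun _ : ℕ => ℝ) p}
    (hB : ∀ (x : lp (fun _ : ℕ => ℝ) p) (n : ℕ), (B x) n = w (n + 1) * x (n + 1))
    (hf : ∀ k i, |f k i| ≤ D k) (h : IsBlockScheme w p.toReal M D s N P)
    {z : lp (fun _ : ℕ => ℝ) p} (hz : z ∈ blockSubspace p w J M f s N P) {k n : ℕ}
    (hfk : ∀ i, M k ≤ i → f k i = 0)
    (hMn : M k ∣ n) (hn1 : N k ≤ n) (hn2 : n + M k ≤ P (k + 1)) :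
    ∑' i, ENNReal.ofReal
        (|((B ^ n) z) i - z (s (J k)) * f k i / cumWeight w i| ^ p.toReal) ≤
      ENNReal.ofReal (|z (s (J k))| ^ p.toReal) * (ENNReal.ofReal (D k ^ p.toReal) *
        ∑' i, ENNReal.ofReal (cumWeight w (i + M k) ^ (-p.toReal))) +
      ENNReal.ofReal (‖z‖ ^ p.toReal) * ∑' l, (2⁻¹ : ℝ≥0∞) ^ (l + (k + 1)) +
      ENNReal.ofReal (2 ^ p.toReal) *
        ∑' j, ENNReal.ofReal (|z (s (j + (k + 1)))| ^ p.toReal) := by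
  have hW := cumWeight_pos hw
  have hp0 : p ≠ 0 := fun h => by simp [h] at hq
  set q := p.toReal with hqdef
  obtain ⟨hz1, hz2⟩ := mem_blockSubspace.1 hz
  have hpt : ∀ i, ENNReal.ofReal (|((B ^ n) z) i - z (s (J k)) * f k i / cumWeight w i| ^ q) ≤
      (ENNReal.ofReal (|z (s (J k))| ^ q) * (ENNReal.ofReal (D k ^ q) *
        (if M k ≤ i then ENNReal.ofReal (cumWeight w i ^ (-q)) else 0)) +
      ENNReal.ofReal (‖z‖ ^ q) * ∑' l, (if k + 1 ≤ l ∧ N l ≤ i + n ∧ i + n < P (l + 1) then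
        ENNReal.ofReal (D l ^ q) * ENNReal.ofReal (cumWeight w i ^ (-q)) else 0)) +
      ENNReal.ofReal (2 ^ q) * ∑' j, (if i = s j - n then
        (if k + 1 ≤ j then ENNReal.ofReal (|z (s j)| ^ q) else 0) else 0) := by
    intro i
    rw [iterate_apply hw hB]
    have e1 : cumWeight w (i + n) / cumWeight w i * z (i + n) =
        (cumWeight w (i + n) * z (i + n)) / cumWeight w i := by ring
    by_cases hlt : i + n < P (k + 1)
    · -- inside block `k`
      have hblk := hz1 k (i + n) (by omega) hlt
      rw [e1, hblk, Nat.add_mod, Nat.mod_eq_zero_of_dvd hMn, add_zero, Nat.mod_mod]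
      by_cases hi : M k ≤ i
      · refine le_add_right (le_add_right ?_)
        rw [if_pos hi, hfk i hi, mul_zero, zero_div, sub_zero, abs_div_rpow_ofReal (hW i), abs_mul,
          Real.mul_rpow (abs_nonneg _) (abs_nonneg _), mul_comm (|f k (i % M k)| ^ q),
          ENNReal.ofReal_mul (by positivity), mul_assoc]
        gcongr
        exact hf _ _
      · rw [Nat.mod_eq_of_lt (by omega), mul_comm (f k i), sub_self, abs_zero,
          Real.zero_rpow hq.ne', ENNReal.ofReal_zero]
        exact zero_le
    · -- beyond block `k`, where the pattern vanishes
      have hi : M k ≤ i := by omega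
      rw [hfk i hi, mul_zero, zero_div, sub_zero]
      by_cases hblk : ∃ l, N l ≤ i + n ∧ i + n < P (l + 1)
      · obtain ⟨l, h1, h2⟩ := hblk
        have hkl := h.lt_of_mem_block (not_lt.1 hlt) h2
        refine le_add_right (le_add_left ?_)
        refine le_trans ?_ (mul_le_mul_right (ENNReal.le_tsum l) _)
        rw [if_pos ⟨hkl, h1, h2⟩, e1, hz1 l (i + n) h1 h2, abs_div_rpow_ofReal (hW i), abs_mul,
          Real.mul_rpow (abs_nonneg _) (abs_nonneg _), mul_comm (|f l _| ^ q),
          ENNReal.ofReal_mul (by positivity), mul_assoc]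
        gcongr
        · exact lp.norm_apply_le_norm hp0 z _
        · exact hf _ _
      · by_cases hs : ∃ j, i + n = s j
        · obtain ⟨j, hj⟩ := hs
          have hkj : k < j := h.lt_of_le_s (by omega)
          refine le_add_left ?_
          refine le_trans ?_ (mul_le_mul_right (ENNReal.le_tsum j) _)
          have hij : i = s j - n := by omega
          rw [if_pos hij, if_pos (by omega), ← ENNReal.ofReal_mul (by positivity),
            ← Real.mul_rpow (by norm_num) (abs_nonneg _), hj, abs_mul]
          refine ENNReal.ofReal_le_ofReal (Real.rpow_le_rpow (by positivity) ?_ hq.le)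
          gcongr
          rw [abs_of_pos (div_pos (hW _) (hW _)), div_le_iff₀ (hW _), hij]
          refine h.good j n ?_
          have := h.P_mono (show k + 1 ≤ j by omega)
          omega
        · push Not at hblk hs
          rw [hz2 (i + n) (fun l hl => absurd hl.2 (not_lt.2 (hblk l hl.1))) hs, mul_zero, abs_zero,
            Real.zero_rpow hq.ne', ENNReal.ofReal_zero]
          exact zero_le
  refine (ENNReal.tsum_le_tsum hpt).trans ?_
  rw [ENNReal.tsum_add, ENNReal.tsum_add, ENNReal.tsum_mul_left, ENNReal.tsum_mul_left,
    ENNReal.tsum_mul_left, ENNReal.tsum_mul_left, ennreal_tsum_ite_le]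
  refine add_le_add (add_le_add le_rfl (mul_le_mul_right (h.tsum_blocks_le (by omega)) _))
    (mul_le_mul_right ?_ _)
  rw [ENNReal.tsum_comm, ← ennreal_tsum_ite_le (fun j => ENNReal.ofReal (|z (s j)| ^ q))]
  refine ENNReal.tsum_le_tsum fun j => ?_
  rw [tsum_ite_eq]

end

/-! ### Orbits of the vectors of the subspace -/

lemma exists_frequently_eq (T : Type*) [Countable T] [Nonempty T] :
    ∃ τ : ℕ → T, ∀ t, ∃ᶠ k in atTop, τ k = t := by
  obtain ⟨g, hg⟩ := exists_surjective_nat T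
  refine ⟨fun k => g k.unpair.1, fun t => ?_⟩
  obtain ⟨a, rfl⟩ := hg t
  rw [frequently_atTop]
  intro b
  exact ⟨Nat.pair a b, Nat.right_le_pair a b, by simp⟩

/-- The sum of the absolute values of the coefficients of a pattern, as a bound for each of them. -/
noncomputable def patternBound (F : ℕ →₀ ℚ) : ℝ := ∑ i ∈ F.support, |(F i : ℝ)|

lemma abs_le_patternBound (F : ℕ →₀ ℚ) (i : ℕ) : |(F i : ℝ)| ≤ patternBound F := by
  by_cases hi : i ∈ F.support
  · exact Finset.single_le_sum (f := fun i => |(F i : ℝ)|) (fun _ _ => abs_nonneg _) hi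
  · rw [Finsupp.notMem_support_iff.1 hi, Rat.cast_zero, abs_zero]
    exact Finset.sum_nonneg fun _ _ => abs_nonneg _

lemma ofReal_abs_add_rpow_le {q : ℝ} (hq : 0 < q) (a b : ℝ) :
    ENNReal.ofReal (|a + b| ^ q) ≤
      ENNReal.ofReal (2 ^ q) * (ENNReal.ofReal (|a| ^ q) + ENNReal.ofReal (|b| ^ q)) := by
  rw [← ENNReal.ofReal_add (by positivity) (by positivity), ← ENNReal.ofReal_mul (by positivity)]
  refine ENNReal.ofReal_le_ofReal ?_
  have h1 : |a + b| ≤ 2 * max |a| |b| := by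
    have := abs_add_le a b
    have := le_max_left |a| |b|
    have := le_max_right |a| |b|
    linarith
  have h2 : (max |a| |b|) ^ q ≤ |a| ^ q + |b| ^ q := by
    have ha : 0 ≤ |a| ^ q := by positivity
    have hb : 0 ≤ |b| ^ q := by positivity
    rcases max_cases |a| |b| with ⟨h, _⟩ | ⟨h, _⟩ <;> rw [h] <;> linarith
  calc |a + b| ^ q ≤ (2 * max |a| |b|) ^ q := Real.rpow_le_rpow (abs_nonneg _) h1 hq.le
    _ = 2 ^ q * (max |a| |b|) ^ q := Real.mul_rpow (by norm_num) (by positivity)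
    _ ≤ _ := by gcongr

lemma tendsto_const_mul_tsum_tail {c : ℝ≥0∞} (hc : c ≠ ∞) {g : ℕ → ℝ≥0∞} (hg : ∑' i, g i ≠ ∞) :
    Tendsto (fun m => c * ∑' i, g (i + m)) atTop (nhds 0) := by
  simpa using ENNReal.Tendsto.const_mul (a := c) (ENNReal.tendsto_sum_nat_add g hg) (Or.inr hc)

/-- If every triple (isolated coordinate, pattern, period) occurs for infinitely many blocks, then
all nonzero vectors of the subspace are `𝒰`-frequently hypercyclic. -/
lemma isUFreqHypercyclicVector_of_mem {p : ℝ≥0∞} [Fact (1 ≤ p)] (hq : 0 < p.toReal) {w : ℕ → ℝ}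
    (hw : ∀ k : ℕ, 1 ≤ k → 0 < w k)
    {B : lp (fun _ : ℕ => ℝ) p →L[ℝ] lp (fun _ : ℕ => ℝ) p}
    (hB : ∀ (x : lp (fun _ : ℕ => ℝ) p) (n : ℕ), (B x) n = w (n + 1) * x (n + 1))
    (hsum : ∑' i, ENNReal.ofReal (cumWeight w i ^ (-p.toReal)) ≠ ∞)
    {τ : ℕ → ℕ × (ℕ →₀ ℚ) × ℕ} (hτ : ∀ t, ∃ᶠ k in atTop, τ k = t) {s N P : ℕ → ℕ}
    (h : IsBlockScheme w p.toReal (fun k => (τ k).2.2) (fun k => patternBound (τ k).2.1) s N P)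
    {z : lp (fun _ : ℕ => ℝ) p}
    (hz : z ∈ blockSubspace p w (fun k => (τ k).1) (fun k => (τ k).2.2)
      (fun k i => ((τ k).2.1 i : ℝ)) s N P) (hz0 : z ≠ 0) :
    IsUFreqHypercyclicVector B z := by
  have hW := cumWeight_pos hw
  set q := p.toReal with hqdef
  obtain ⟨j₀, hα⟩ : ∃ j, z (s j) ≠ 0 := by
    by_contra! hall
    obtain ⟨hz1, hz2⟩ := mem_blockSubspace.1 hz
    refine hz0 (lp.ext (funext fun i => ?_))
    by_cases hblk : ∃ k, N k ≤ i ∧ i < P (k + 1)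
    · obtain ⟨k, h1, h2⟩ := hblk
      have := hz1 k i h1 h2
      rw [hall, mul_zero] at this
      exact (mul_eq_zero.1 this).resolve_left (hW i).ne'
    · by_cases hs : ∃ j, i = s j
      · obtain ⟨j, rfl⟩ := hs
        exact hall j
      · exact hz2 i (not_exists.1 hblk) (not_exists.1 hs)
  intro U hU hUne
  obtain ⟨u, hu⟩ := hUne
  obtain ⟨ε, hε, hball⟩ := Metric.isOpen_iff.1 hU u hu
  -- `B ^ n z - u` is made of four errors: the three terms of `tsum_error_le`, and the
  -- approximation of `u` by a pattern.
  obtain ⟨η, hη, hηle⟩ : ∃ η : ℝ≥0∞, 0 < η ∧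
      ENNReal.ofReal (2 ^ q) * (η + η + η + η) ≤ ENNReal.ofReal ((ε / 2) ^ q) := by
    refine ⟨ENNReal.ofReal ((ε / 2) ^ q / (4 * 2 ^ q)), by positivity, le_of_eq ?_⟩
    rw [← ENNReal.ofReal_add (by positivity) (by positivity),
      ← ENNReal.ofReal_add (by positivity) (by positivity),
      ← ENNReal.ofReal_add (by positivity) (by positivity), ← ENNReal.ofReal_mul (by positivity)]
    congr 1
    have : (2 : ℝ) ^ q ≠ 0 := by positivity
    field_simp
    ring
  obtain ⟨F, hF⟩ := exists_rational_approx hq hW u hα hη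
  -- a period beyond the support of the pattern, for which the repetitions are negligible
  obtain ⟨M, hM1, hMF, hMη⟩ : ∃ M, 1 ≤ M ∧ (∀ i, M ≤ i → F i = 0) ∧
      ENNReal.ofReal (|z (s j₀)| ^ q) * (ENNReal.ofReal (patternBound F ^ q) *
        ∑' i, ENNReal.ofReal (cumWeight w (i + M) ^ (-q))) ≤ η := by
    have h1 := tendsto_const_mul_tsum_tail
      (c := ENNReal.ofReal (|z (s j₀)| ^ q) * ENNReal.ofReal (patternBound F ^ q))
      (ENNReal.mul_ne_top ENNReal.ofReal_ne_top ENNReal.ofReal_ne_top) hsum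
    obtain ⟨M, hM, hM1⟩ := ((h1.eventually_lt_const hη).and
      (eventually_ge_atTop (F.support.sup id + 1))).exists
    refine ⟨M, by omega, fun i hi => ?_, ?_⟩
    · by_contra hne
      have : i ≤ F.support.sup id :=
        Finset.le_sup (f := id) (Finsupp.mem_support_iff.2 hne)
      omega
    · rw [← mul_assoc]
      exact hM.le
  have hgeo := (tendsto_const_mul_tsum_tail (c := ENNReal.ofReal (‖z‖ ^ q)) ENNReal.ofReal_ne_top
    (g := fun l => (2⁻¹ : ℝ≥0∞) ^ l)
    (by rw [ENNReal.tsum_geometric_two]; norm_num)).comp (tendsto_add_atTop_nat 1)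
  have hiso := (tendsto_const_mul_tsum_tail (c := ENNReal.ofReal (2 ^ q)) ENNReal.ofReal_ne_top
    (g := fun j => ENNReal.ofReal (|z (s j)| ^ q))
    (ne_top_of_le_ne_top (ennreal_tsum_ne_top hq z)
      (ENNReal.tsum_comp_le_tsum_of_injective h.s_strictMono.injective
        fun i => ENNReal.ofReal (|z i| ^ q)))).comp (tendsto_add_atTop_nat 1)
  refine upperDensity_pos_of_blocks hM1 (N := N)
    (fun k => by have := h.M_le_N k; omega) ?_
  refine ((hτ (j₀, F, M)).and_eventually
    ((hgeo.eventually_lt_const hη).and (hiso.eventually_lt_const hη))).mono ?_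
  rintro k ⟨hk, hk1, hk2⟩
  have hMN := h.M_le_N k
  have hPs := h.P_succ k
  simp only [hk] at hMN
  refine ⟨by omega, fun n hMn hn1 hn2 => hball ?_⟩
  have herr := tsum_error_le (k := k) (n := n) hq hw hB
    (fun k i => abs_le_patternBound (τ k).2.1 i) h hz
    (by intro i hi; simp only [hk] at hi ⊢; rw [hMF i hi, Rat.cast_zero])
    (by simpa only [hk] using hMn) hn1 (by simp only [hk]; omega)
  simp only [hk] at herr
  rw [Metric.mem_ball, dist_eq_norm]
  refine lt_of_le_of_lt (norm_le_of_ennreal_tsum_le hq (r := ε / 2) (by positivity) ?_)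
    (half_lt_self hε)
  refine le_trans ?_ hηle
  calc ∑' i, ENNReal.ofReal (|((B ^ n) z - u) i| ^ q)
      ≤ ∑' i, ENNReal.ofReal (2 ^ q) *
        (ENNReal.ofReal (|((B ^ n) z) i - z (s j₀) * F i / cumWeight w i| ^ q) +
          ENNReal.ofReal (|z (s j₀) * F i / cumWeight w i - u i| ^ q)) := by
        refine ENNReal.tsum_le_tsum fun i => ?_
        rw [lp.coeFn_sub, Pi.sub_apply, ← sub_add_sub_cancel _ (z (s j₀) * F i / cumWeight w i)]
        exact ofReal_abs_add_rpow_le hq _ _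
    _ ≤ ENNReal.ofReal (2 ^ q) * (η + η + η + η) := by
        rw [ENNReal.tsum_mul_left, ENNReal.tsum_add]
        refine mul_le_mul_right (add_le_add (herr.trans ?_) hF) _
        exact add_le_add (add_le_add hMη hk1.le) hk2.le

lemma IsUFreqHypercyclicVector.isHypercyclicVector {X : Type*} [NormedAddCommGroup X]
    [NormedSpace ℝ X] {T : X →L[ℝ] X} {x : X} (h : IsUFreqHypercyclicVector T x) :
    IsHypercyclicVector T x := by
  refine dense_iff_inter_open.2 fun U hU hne => ?_
  obtain ⟨n, hn⟩ := nonempty_of_upperDensity_pos (h U hU hne)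
  exact ⟨_, hn, n, rfl⟩

/-- Theorem 1.1. For `1 ≤ p < ∞` and a bounded positive weight
`w = (ω_k)_{k ≥ 1}` (coordinates of `ℓ_p` are indexed by `ℕ`, index `n`
corresponding to the paper's position `n+1`, so that the weighted backward shift
`B_w` satisfies `(B_w x)_n = ω_{n+1} x_{n+1}`), the following are equivalent:
(i) `∑_{k ≥ 1} (ω_1 ⋯ ω_k)^{-p} < ∞` and `sup_{n ≥ 1} inf_{k ≥ 1} ∏_{j=1}^n ω_{k+j} ≤ 1`;
(ii) `B_w` admits a `𝒰`-frequently hypercyclic subspace;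
(iii) `B_w` is `𝒰`-frequently hypercyclic and admits a hypercyclic subspace. -/
theorem uFreqHypercyclicSubspace_tfae (p : ℝ≥0∞) [Fact (1 ≤ p)] (hp : p ≠ ∞)
    (w : ℕ → ℝ) (hwpos : ∀ k : ℕ, 1 ≤ k → 0 < w k) (hwbdd : ∃ C : ℝ, ∀ k : ℕ, 1 ≤ k → w k ≤ C)
    (B : lp (fun _ : ℕ => ℝ) p →L[ℝ] lp (fun _ : ℕ => ℝ) p)
    (hB : ∀ (x : lp (fun _ : ℕ => ℝ) p) (n : ℕ), (B x) n = w (n + 1) * x (n + 1)) :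
    List.TFAE
      [(Summable fun k : ℕ => (∏ j ∈ Finset.Icc 1 (k + 1), w j) ^ (-(p.toReal))) ∧
          ∀ n : ℕ, 1 ≤ n → (⨅ k : ℕ, ∏ j ∈ Finset.Icc 1 n, w (k + 1 + j)) ≤ 1,
        ∃ Y : Submodule ℝ (lp (fun _ : ℕ => ℝ) p),
          IsClosed (Y : Set (lp (fun _ : ℕ => ℝ) p)) ∧ ¬ FiniteDimensional ℝ Y ∧
          ∀ x ∈ Y, x ≠ 0 → IsUFreqHypercyclicVector B x,
        (∃ x : lp (fun _ : ℕ => ℝ) p, IsUFreqHypercyclicVector B x) ∧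
          ∃ Y : Submodule ℝ (lp (fun _ : ℕ => ℝ) p),
            IsClosed (Y : Set (lp (fun _ : ℕ => ℝ) p)) ∧ ¬ FiniteDimensional ℝ Y ∧
            ∀ x ∈ Y, x ≠ 0 → IsHypercyclicVector B x] := by
  have hq := toReal_pos_of_fact hp
  obtain ⟨C₀, hC₀⟩ := hwbdd
  obtain ⟨C, hC1, hC⟩ : ∃ C : ℝ, 1 ≤ C ∧ ∀ k : ℕ, 1 ≤ k → w k ≤ C :=
    ⟨max C₀ 1, le_max_right _ _, fun k hk => (hC₀ k hk).trans (le_max_left _ _)⟩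
  tfae_have 1 → 2 := by
    rintro ⟨hS, hinf⟩
    have hS' : Summable fun k => cumWeight w k ^ (-p.toReal) := (summable_nat_add_iff 1).1 hS
    have hsum : ∑' i, ENNReal.ofReal (cumWeight w i ^ (-p.toReal)) ≠ ∞ := hS'.tsum_ofReal_ne_top
    obtain ⟨τ, hτ⟩ := exists_frequently_eq (ℕ × (ℕ →₀ ℚ) × ℕ)
    obtain ⟨s, N, P, h⟩ := exists_blockScheme hsum
      (exists_good_position hwpos hC1 hC (tendsto_cumWeight hwpos hq hS') hinf)
      (fun k => (τ k).2.2) (fun k => patternBound (τ k).2.1)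
    exact ⟨blockSubspace p w (fun k => (τ k).1) (fun k => (τ k).2.2)
      (fun k i => ((τ k).2.1 i : ℝ)) s N P, isClosed_blockSubspace _ _ _ _ _ _ _,
      not_finiteDimensional_blockSubspace hq hwpos
        (fun k i => abs_le_patternBound (τ k).2.1 i) h,
      fun z hz hz0 => isUFreqHypercyclicVector_of_mem hq hwpos hB hsum hτ h hz hz0⟩
  tfae_have 2 → 3 := by
    rintro ⟨Y, hYc, hYd, hY⟩
    refine ⟨?_, Y, hYc, hYd, fun x hx hx0 => (hY x hx hx0).isHypercyclicVector⟩
    obtain ⟨x, hx, hx0⟩ := Y.ne_bot_iff.1 (by rintro rfl; exact hYd inferInstance)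
    exact ⟨x, hY x hx hx0⟩
  tfae_have 3 → 1 := by
    rintro ⟨⟨x, hx⟩, Y, hYc, hYd, hY⟩
    refine ⟨(summable_nat_add_iff 1).2
      (summable_of_uFreqHypercyclicVector hp hwpos hC1 hC hB hx), fun n hn => ?_⟩
    by_contra! hgt
    obtain ⟨N, hN1, hN⟩ := exists_expanding_of_iInf hwpos hn hgt
    obtain ⟨y, hy, hy0, hny⟩ := not_hypercyclic_of_expanding hp hwpos hB hN1 hN hYc hYd
    exact hny (hY y hy hy0)
  tfae_finish
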